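/- For fixed integers s ≥ 2 and k ≥ 2 with k not a perfect s-th power, and for every ε > 0, there exists K_ε > 0 such that for all convergents p_n/q_n of the s-th root of k with d_n = k·q_n^s − p_n^s ≠ 0: max(p_n^s, k·q_n^s) < K_ε · (|d_n| · p_n · q_n · k)^{1+ε}. -/

import Mathlib

namespace RothAux
set_option linter.unusedSectionVars false
set_option linter.unusedSimpArgs false
open MvPolynomial

/-- multivariate Hasse derivative -/
noncomputable def hD {σ R : Type*} [Fintype σ] [CommRing R] (I : σ →₀ ℕ) :
    MvPolynomial σ R →ₗ[R] MvPolynomial σ R :=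
  (basisMonomials σ R).constr R
    (fun K => monomial (K - I) ((∏ i, (K i).choose (I i) : ℕ) : R))

section
variable {σ R : Type*} [Fintype σ] [CommRing R]

lemma hD_monomial (I K : σ →₀ ℕ) (c : R) :
    hD I (monomial K c) = monomial (K - I) (c * ((∏ i, (K i).choose (I i) : ℕ) : R)) := by
  have h : monomial K c = c • (basisMonomials σ R K) := by
    simp [coe_basisMonomials, smul_monomial]
  rw [h, map_smul, hD, Module.Basis.constr_basis, smul_monomial, smul_eq_mul]

lemma coeff_hD (I J : σ →₀ ℕ) (P : MvPolynomial σ R) :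
    coeff J (hD I P) = coeff (J + I) P * ((∏ i, ((J + I) i).choose (I i) : ℕ) : R) := by
  classical
  induction P using MvPolynomial.induction_on' with
  | monomial K c =>
    rw [hD_monomial, coeff_monomial, coeff_monomial]
    by_cases h : K = J + I
    · subst h; simp
    · rw [if_neg h, zero_mul]
      split_ifs with h2
      · have : ∃ i, K i < I i := by
          by_contra hc
          push Not at hc
          apply h
          rw [← h2]
          exact (tsub_add_cancel_of_le (show I ≤ K from hc)).symm
        obtain ⟨i, hi⟩ := this
        rw [Finset.prod_eq_zero (Finset.mem_univ i) (Nat.choose_eq_zero_of_lt hi)]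
        simp
      · rfl
  | add p q hp hq => simp [hp, hq, add_mul]

lemma hD_zero (P : MvPolynomial σ R) : hD 0 P = P := by
  ext J; rw [coeff_hD]; simp

lemma pderiv_hD (I : σ →₀ ℕ) (i : σ) (P : MvPolynomial σ R) :
    pderiv i (hD I P) = (C ((I i + 1 : ℕ) : R)) * hD (I + Finsupp.single i 1) P := by
  classical
  induction P using MvPolynomial.induction_on' with
  | monomial K c =>
    rw [hD_monomial, hD_monomial, pderiv_monomial, C_mul_monomial]
    rw [tsub_add_eq_tsub_tsub]
    congr 1
    rw [mul_left_comm, mul_assoc]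
    congr 1
    norm_cast
    have e : ∀ j, (K j).choose ((I + Finsupp.single i 1 : σ →₀ ℕ) j) =
        if j = i then (K j).choose (I j + 1) else (K j).choose (I j) := by
      intro j
      by_cases hj : j = i
      · subst hj; simp
      · simp [hj, Finsupp.single_apply, Ne.symm hj]
    simp_rw [e]
    rw [← Finset.mul_prod_erase Finset.univ (fun j => (K j).choose (I j)) (Finset.mem_univ i)]
    rw [← Finset.mul_prod_erase Finset.univ (fun j => if j = i then (K j).choose (I j + 1)
      else (K j).choose (I j)) (Finset.mem_univ i)]
    rw [Finset.prod_congr (f := fun j => if j = i then (K j).choose (I j + 1)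
      else (K j).choose (I j)) (g := fun j => (K j).choose (I j)) (s₂ := Finset.univ.erase i) rfl]
    swap
    · intro j hj; simp only [if_neg (Finset.ne_of_mem_erase hj)]
    simp only [if_true, Finsupp.coe_tsub, Pi.sub_apply]
    have := Nat.choose_succ_right_eq (K i) (I i)
    congr 1
    rw [mul_right_comm, ← this]; ring
  | add p q hp hq => simp [hp, hq, mul_add]

/-- shift of variables -/
noncomputable def sh {σ R : Type*} [CommRing R] (b : σ → R) :
    MvPolynomial σ R →ₐ[R] MvPolynomial σ R :=
  aeval (fun i => X i + C (b i))

lemma pderiv_sh (b : σ → R) (i : σ) (P : MvPolynomial σ R) :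
    pderiv i (sh b P) = sh b (pderiv i P) := by
  classical
  induction P using MvPolynomial.induction_on with
  | C a => simp [sh]
  | add p q hp hq => simp [hp, hq]
  | mul_X p j hp =>
    rw [map_mul, Derivation.leibniz, Derivation.leibniz, hp]
    simp only [smul_eq_mul, map_add, map_mul]
    congr 2
    simp [sh, pderiv_X]
    by_cases h : j = i
    · subst h; simp
    · simp [Pi.single_apply, h]

lemma coeff_zero_sh (b : σ → R) (P : MvPolynomial σ R) : coeff 0 (sh b P) = eval b P := by
  rw [← constantCoeff_eq]
  have : (constantCoeff (R := R) (σ := σ)).comp (sh b).toRingHom = eval b := by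
    ext i <;> simp [sh]
  exact congrArg (fun f => f P) this

lemma hD_sh {R : Type*} [Field R] [CharZero R] (b : σ → R) (I : σ →₀ ℕ) (P : MvPolynomial σ R) :
    hD I (sh b P) = sh b (hD I P) := by
  classical
  induction h : I.degree generalizing I with
  | zero =>
    have : I = 0 := (Finsupp.degree_eq_zero_iff I).mp h
    subst this; simp [hD_zero]
  | succ n ih =>
    have hne : ∃ i, I i ≠ 0 := by
      by_contra hc
      push Not at hc
      have : I = 0 := by ext i; simp [hc]
      subst this; simp at h
    obtain ⟨i, hi⟩ := hne
    set I' := I - Finsupp.single i 1 with hI'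
    have e : I' + Finsupp.single i 1 = I := by
      apply tsub_add_cancel_of_le
      rw [Finsupp.single_le_iff]; omega
    have hd : I'.degree = n := by
      have := congrArg Finsupp.degree e
      simp at this; omega
    have h1 := pderiv_hD I' i (sh b P)
    have h2 := pderiv_hD I' i P
    rw [ih I' hd, pderiv_sh, h2, e, map_mul] at h1
    have hC : sh b (C ((I' i + 1 : ℕ) : R)) = C ((I' i + 1 : ℕ) : R) := by simp [sh]
    rw [hC] at h1
    have hn : (C ((I' i + 1 : ℕ) : R) : MvPolynomial σ R) ≠ 0 := by
      rw [Ne, C_eq_zero]; exact Nat.cast_ne_zero.mpr (by omega)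
    exact (mul_left_cancel₀ hn h1).symm

lemma coeff_sh {R : Type*} [Field R] [CharZero R] (b : σ → R) (J : σ →₀ ℕ)
    (P : MvPolynomial σ R) : coeff J (sh b P) = eval b (hD J P) := by
  rw [← coeff_zero_sh, ← hD_sh, coeff_hD]; simp

lemma hD_map {S : Type*} [CommRing S] (f : R →+* S) (I : σ →₀ ℕ) (P : MvPolynomial σ R) :
    hD I (map f P) = map f (hD I P) := by
  ext J; rw [coeff_hD, coeff_map, coeff_map, coeff_hD]; simp

end

section len
variable {σ : Type*}

/-- length of an integer polynomial -/
noncomputable def len (P : MvPolynomial σ ℤ) : ℕ := ∑ K ∈ P.support, (coeff K P).natAbs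

lemma len_eq_sum (P : MvPolynomial σ ℤ) (s : Finset (σ →₀ ℕ)) (h : P.support ⊆ s) :
    len P = ∑ K ∈ s, (coeff K P).natAbs := by
  apply Finset.sum_subset h
  intro K _ hK; simp at hK; simp [hK]

lemma coeff_le_len (P : MvPolynomial σ ℤ) (K : σ →₀ ℕ) : (coeff K P).natAbs ≤ len P := by
  classical
  rw [len_eq_sum P (insert K P.support) (Finset.subset_insert _ _)]
  exact Finset.single_le_sum (f := fun K => (coeff K P).natAbs) (fun _ _ => Nat.zero_le _)
    (Finset.mem_insert_self _ _)

lemma len_add (P Q : MvPolynomial σ ℤ) : len (P + Q) ≤ len P + len Q := by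
  classical
  rw [len_eq_sum (P + Q) _ (support_add), len_eq_sum P _ (Finset.subset_union_left),
    len_eq_sum Q _ (Finset.subset_union_right), ← Finset.sum_add_distrib]
  apply Finset.sum_le_sum
  intro K _
  rw [coeff_add]; exact Int.natAbs_add_le _ _

lemma len_zero : len (0 : MvPolynomial σ ℤ) = 0 := by simp [len]

lemma len_neg (P : MvPolynomial σ ℤ) : len (-P) = len P := by
  simp [len]

lemma len_sum {ι : Type*} (s : Finset ι) (f : ι → MvPolynomial σ ℤ) :
    len (∑ i ∈ s, f i) ≤ ∑ i ∈ s, len (f i) := by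
  classical
  induction s using Finset.induction_on with
  | empty => simp [len_zero]
  | insert a s ha ih =>
    rw [Finset.sum_insert ha, Finset.sum_insert ha]
    exact (len_add _ _).trans (by omega)

lemma len_monomial_le (K : σ →₀ ℕ) (c : ℤ) : len (monomial K c) ≤ c.natAbs := by
  classical
  rw [len_eq_sum _ {K} support_monomial_subset]; simp

lemma len_mul (P Q : MvPolynomial σ ℤ) : len (P * Q) ≤ len P * len Q := by
  classical
  rw [MvPolynomial.mul_def, MvPolynomial.sum_def]
  refine (len_sum _ _).trans ?_
  conv_rhs => rw [len, Finset.sum_mul]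
  apply Finset.sum_le_sum
  intro K _
  rw [MvPolynomial.sum_def]
  refine (len_sum _ _).trans ?_
  rw [len, Finset.mul_sum]
  apply Finset.sum_le_sum
  intro L _
  refine (len_monomial_le _ _).trans ?_
  rw [Int.natAbs_mul]

lemma len_one_le : len (1 : MvPolynomial σ ℤ) ≤ 1 := len_monomial_le 0 1

lemma len_prod_le {ι : Type*} (s : Finset ι) (f : ι → MvPolynomial σ ℤ) (B : ℕ)
    (h : ∀ i ∈ s, len (f i) ≤ B) : len (∏ i ∈ s, f i) ≤ B ^ s.card := by
  classical
  induction s using Finset.induction_on with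
  | empty => simpa using len_one_le
  | insert a s ha ih =>
    rw [Finset.prod_insert ha, Finset.card_insert_of_notMem ha, pow_succ']
    refine (len_mul _ _).trans (Nat.mul_le_mul (h a (by simp)) (ih ?_))
    intro i hi; exact h i (by simp [hi])

lemma len_det_le {l : ℕ} (M : Matrix (Fin l) (Fin l) (MvPolynomial σ ℤ)) (B : ℕ)
    (h : ∀ i j, len (M i j) ≤ B) : len M.det ≤ l.factorial * B ^ l := by
  rw [Matrix.det_apply]
  refine (len_sum _ _).trans ?_
  have : ∀ τ ∈ (Finset.univ : Finset (Equiv.Perm (Fin l))),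
      len (Equiv.Perm.sign τ • ∏ i, M (τ i) i) ≤ B ^ l := by
    intro τ _
    have h2 := len_prod_le Finset.univ (fun i => M (τ i) i) B (fun i _ => h _ _)
    rw [Finset.card_univ, Fintype.card_fin] at h2
    rcases Int.units_eq_one_or (Equiv.Perm.sign τ) with hs | hs <;> rw [hs]
    · simpa using h2
    · simpa [len_neg] using h2
  refine (Finset.sum_le_sum this).trans ?_
  simp [Finset.card_univ, Fintype.card_perm]

lemma len_hD [Fintype σ] (r : σ → ℕ) (I : σ →₀ ℕ) (P : MvPolynomial σ ℤ)
    (hP : ∀ i, degreeOf i P ≤ r i) : len (hD I P) ≤ 2 ^ (∑ i, r i) * len P := by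
  classical
  conv_lhs => rw [P.as_sum, map_sum]
  refine (len_sum _ _).trans ?_
  rw [len, Finset.mul_sum]
  apply Finset.sum_le_sum
  intro K hK
  rw [hD_monomial]
  refine (len_monomial_le _ _).trans ?_
  rw [Int.natAbs_mul, mul_comm]
  apply Nat.mul_le_mul_right
  rw [Int.natAbs_natCast, ← Finset.prod_pow_eq_pow_sum]
  apply Finset.prod_le_prod' 
  intro i _
  refine (Nat.choose_le_two_pow _ _).trans (Nat.pow_le_pow_right (by norm_num) ?_)
  exact (monomial_le_degreeOf i hK).trans (hP i)

lemma degreeOf_hD {R : Type*} [CommRing R] [Fintype σ] (i : σ) (I : σ →₀ ℕ) (P : MvPolynomial σ R) :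
    degreeOf i (hD I P) ≤ degreeOf i P := by
  classical
  rw [degreeOf_le_iff]
  intro J hJ
  rw [mem_support_iff, coeff_hD] at hJ
  have := left_ne_zero_of_mul hJ
  have h2 := monomial_le_degreeOf i (mem_support_iff.mpr this)
  simp at h2; omega

end len
end RothAux

namespace RothAux
open MvPolynomial

lemma wronskian_abs {K R ι E : Type*} [Field K] [CommRing R] [IsDomain R] [Algebra K R]
    (D : ι → Derivation K R R) (dd : E → R → R) (od : E → ℕ) (e0 : E)
    (h0 : ∀ f, dd e0 f = f) (ho : od e0 = 0) (su : E → ι → E)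
    (hsu : ∀ e i, od (su e i) ≤ od e + 1) (cf : E → ι → R)
    (hDd : ∀ e i f, D i (dd e f) = cf e i * dd (su e i) f)
    (hconst : ∀ a b : R, a ≠ 0 → (∀ i, a * D i b = b * D i a) → ∃ c : K, b = c • a) :
    ∀ (l : ℕ) (f : Fin l → R), LinearIndependent K f →
      ∃ I : Fin l → E, (∀ i, od (I i) ≤ i) ∧
        (Matrix.of fun i j => dd (I i) (f j)).det ≠ 0 := by
  intro l
  induction l with
  | zero => intro f _; exact ⟨fun i => i.elim0, fun i => i.elim0, by simp⟩
  | succ l ih =>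
    intro f hf
    obtain ⟨I, hI, hdet⟩ := ih (f ∘ Fin.castSucc) (hf.comp _ (Fin.castSucc_injective l))
    set Δ := (Matrix.of fun i j => dd (I i) ((f ∘ Fin.castSucc) j)).det with hΔ
    by_contra hall
    push Not at hall
    set c : Fin (l + 1) → R := fun j => (-1) ^ (l + (j : ℕ)) *
      (Matrix.of fun i j' => dd (I i) (f (j.succAbove j'))).det with hc
    have clast : c (Fin.last l) = Δ := by
      simp only [hc, hΔ, Fin.val_last, Fin.succAbove_last, Function.comp]
      rw [← two_mul, pow_mul]; simp
    have H : ∀ e, od e ≤ l → ∑ j, c j * dd e (f j) = 0 := by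
      intro e he
      have h1 := hall (Fin.snoc (α := fun _ => E) I e) (by
        intro i
        refine Fin.lastCases ?_ (fun i => ?_) i
        · simpa using he
        · simpa using hI i)
      rw [Matrix.det_succ_row _ (Fin.last l)] at h1
      rw [← h1]
      apply Finset.sum_congr rfl
      intro j _
      simp only [hc, Matrix.of_apply, Fin.snoc_last, Fin.val_last]
      rw [mul_right_comm]
      congr 2
      ext i j'
      simp
    have H2 : ∀ e, od e < l → ∀ i, ∑ j, dd e (f j) * D i (c j) = 0 := by
      intro e he i
      have h1 := congrArg (D i) (H e he.le)
      rw [map_sum, map_zero] at h1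
      have h2 := H (su e i) ((hsu e i).trans he)
      simp only [Derivation.leibniz, smul_eq_mul, hDd, Finset.sum_add_distrib] at h1
      have h3 : ∑ j, c j * (cf e i * dd (su e i) (f j)) = 0 := by
        rw [← mul_zero (cf e i), ← h2, Finset.mul_sum]
        exact Finset.sum_congr rfl (fun j _ => by ring)
      rw [h3, zero_add] at h1
      exact h1
    have H3 : ∀ i j, Δ * D i (c j) = c j * D i Δ := by
      intro i
      have hv : (fun j : Fin l => Δ * D i (c j.castSucc) - c j.castSucc * D i Δ) = 0 := by
        apply Matrix.eq_zero_of_mulVec_eq_zero hdet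
        ext a
        have ha : od (I a) < l := (hI a).trans_lt a.2
        have e1 := H (I a) ha.le
        have e2 := H2 (I a) ha i
        rw [Fin.sum_univ_castSucc, clast] at e1 e2
        simp only [Matrix.mulVec, dotProduct, Matrix.of_apply, Function.comp, Pi.zero_apply]
        have : ∑ x : Fin l, dd (I a) (f x.castSucc) *
            (Δ * D i (c x.castSucc) - c x.castSucc * D i Δ) =
            Δ * ∑ x : Fin l, dd (I a) (f x.castSucc) * D i (c x.castSucc) -
            D i Δ * ∑ x : Fin l, c x.castSucc * dd (I a) (f x.castSucc) := by
          rw [Finset.mul_sum, Finset.mul_sum, ← Finset.sum_sub_distrib]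
          exact Finset.sum_congr rfl (fun j _ => by ring)
        rw [this]
        linear_combination Δ * e2 - D i Δ * e1
      intro j
      refine Fin.lastCases ?_ (fun j => ?_) j
      · rw [clast]
      · exact sub_eq_zero.mp (congrFun hv j)
    choose lam hlam using fun j => hconst Δ (c j) hdet (fun i => H3 i j)
    have h5 := H e0 (by omega)
    simp only [h0] at h5
    have h6 : Δ * ∑ j, lam j • f j = 0 := by
      rw [← h5, Finset.mul_sum]
      refine Finset.sum_congr rfl (fun j _ => ?_)
      rw [hlam j]; simp
    have h7 := (mul_eq_zero.mp h6).resolve_left hdet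
    have h8 := Fintype.linearIndependent_iff.mp hf lam h7 (Fin.last l)
    have h9 := hlam (Fin.last l)
    rw [h8, clast, zero_smul] at h9
    exact hdet h9

lemma const_mv {n : ℕ} (a b : MvPolynomial (Fin n) ℝ) (ha : a ≠ 0)
    (h : ∀ i, a * pderiv i b = b * pderiv i a) : ∃ c : ℝ, b = c • a := by
  classical
  let m : MonomialOrder (Fin n) := MonomialOrder.lex
  have key : ∀ e : MvPolynomial (Fin n) ℝ, e ≠ 0 → (∀ i, a * pderiv i e = e * pderiv i a) →
      m.degree e = m.degree a := by
    intro e he hh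
    ext i
    have cf : ∀ (f : MvPolynomial (Fin n) ℝ) (J : Fin n →₀ ℕ),
        coeff J (X i * pderiv i f) = (J i : ℝ) * coeff J f := by
      intro f J
      induction f using MvPolynomial.induction_on' with
      | monomial K c =>
        rw [X_mul_pderiv_monomial]
        simp only [coeff_smul, coeff_monomial]
        split_ifs with hK
        · subst hK; simp
        · simp
      | add p q hp hq => simp [hp, hq, mul_add]
    have dg : ∀ f : MvPolynomial (Fin n) ℝ,
        m.toSyn (m.degree (X i * pderiv i f)) ≤ m.toSyn (m.degree f) := by
      intro f
      rw [MonomialOrder.degree_le_iff]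
      intro J hJ
      rw [mem_support_iff, cf] at hJ
      exact MonomialOrder.le_degree (mem_support_iff.mpr (right_ne_zero_of_mul hJ))
    have h1 : a * (X i * pderiv i e) = (X i * pderiv i a) * e := by
      linear_combination X i * hh i
    have h2 := congrArg (coeff (m.degree a + m.degree e)) h1
    rw [MonomialOrder.coeff_mul_of_add_of_degree_le (m := m) le_rfl (dg e),
      MonomialOrder.coeff_mul_of_add_of_degree_le (m := m) (dg a) le_rfl, cf, cf] at h2
    have ea : coeff (m.degree a) a ≠ 0 := MonomialOrder.leadingCoeff_ne_zero_iff.mpr ha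
    have ee : coeff (m.degree e) e ≠ 0 := MonomialOrder.leadingCoeff_ne_zero_iff.mpr he
    have h3 : ((m.degree e i : ℝ) - (m.degree a i : ℝ)) *
        (coeff (m.degree a) a * coeff (m.degree e) e) = 0 := by linear_combination h2
    have h4 := (mul_eq_zero.mp h3).resolve_right (mul_ne_zero ea ee)
    exact_mod_cast sub_eq_zero.mp h4
  have ea : coeff (m.degree a) a ≠ 0 := MonomialOrder.leadingCoeff_ne_zero_iff.mpr ha
  refine ⟨coeff (m.degree a) b / coeff (m.degree a) a, ?_⟩
  by_contra hne
  set c := coeff (m.degree a) b / coeff (m.degree a) a with hc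
  have he : b - c • a ≠ 0 := sub_ne_zero.mpr hne
  have h1 := key (b - c • a) he (by
    intro i
    rw [map_sub, Derivation.map_smul, mul_sub, sub_mul, h i]
    simp)
  have h2 : coeff (m.degree (b - c • a)) (b - c • a) ≠ 0 :=
    MonomialOrder.leadingCoeff_ne_zero_iff.mpr he
  rw [h1] at h2
  apply h2
  simp [hc]
  field_simp
  simp

lemma const_poly (a b : Polynomial ℝ) (ha : a ≠ 0)
    (h : a * Polynomial.derivative b = b * Polynomial.derivative a) : ∃ c : ℝ, b = c • a := by
  have key : ∀ e : Polynomial ℝ, e ≠ 0 →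
      a * Polynomial.derivative e = e * Polynomial.derivative a → e.natDegree = a.natDegree := by
    intro e he hh
    have cf : ∀ (f : Polynomial ℝ) (J : ℕ),
        (Polynomial.X * Polynomial.derivative f).coeff J = (J : ℝ) * f.coeff J := by
      intro f J
      cases J with
      | zero => simp
      | succ J => rw [Polynomial.coeff_X_mul, Polynomial.coeff_derivative]; push_cast; ring
    have dg : ∀ f : Polynomial ℝ, (Polynomial.X * Polynomial.derivative f).natDegree
        ≤ f.natDegree := by
      intro f
      rw [Polynomial.natDegree_le_iff_coeff_eq_zero]
      intro J hJ
      rw [cf, Polynomial.coeff_eq_zero_of_natDegree_lt hJ, mul_zero]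
    have h1 : a * (Polynomial.X * Polynomial.derivative e) =
        (Polynomial.X * Polynomial.derivative a) * e := by
      linear_combination Polynomial.X * hh
    have h2 := congrArg (fun f => Polynomial.coeff f (a.natDegree + e.natDegree)) h1
    rw [Polynomial.coeff_mul_add_eq_of_natDegree_le le_rfl (dg e),
      Polynomial.coeff_mul_add_eq_of_natDegree_le (dg a) le_rfl, cf, cf] at h2
    have ea : a.coeff a.natDegree ≠ 0 := Polynomial.leadingCoeff_ne_zero.mpr ha
    have ee : e.coeff e.natDegree ≠ 0 := Polynomial.leadingCoeff_ne_zero.mpr he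
    have h3 : ((e.natDegree : ℝ) - (a.natDegree : ℝ)) *
        (a.coeff a.natDegree * e.coeff e.natDegree) = 0 := by linear_combination h2
    have h4 := (mul_eq_zero.mp h3).resolve_right (mul_ne_zero ea ee)
    exact_mod_cast sub_eq_zero.mp h4
  have ea : a.coeff a.natDegree ≠ 0 := Polynomial.leadingCoeff_ne_zero.mpr ha
  refine ⟨b.coeff a.natDegree / a.coeff a.natDegree, ?_⟩
  by_contra hne
  set c := b.coeff a.natDegree / a.coeff a.natDegree with hc
  have he : b - c • a ≠ 0 := sub_ne_zero.mpr hne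
  have h1 := key (b - c • a) he (by
    rw [map_sub, Polynomial.derivative_smul, mul_sub, sub_mul, h]
    simp)
  have h2 : (b - c • a).coeff (b - c • a).natDegree ≠ 0 := Polynomial.leadingCoeff_ne_zero.mpr he
  rw [h1] at h2
  apply h2
  rw [Polynomial.coeff_sub, Polynomial.coeff_smul, smul_eq_mul, hc]
  field_simp
  simp

lemma wronskian_mv {n l : ℕ} (f : Fin l → MvPolynomial (Fin n) ℝ) (hf : LinearIndependent ℝ f) :
    ∃ I : Fin l → (Fin n →₀ ℕ), (∀ i, (I i).degree ≤ i) ∧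
      (Matrix.of fun i j => hD (I i) (f j)).det ≠ 0 :=
  wronskian_abs (K := ℝ) (fun i => pderiv i) (fun e f => hD e f) Finsupp.degree 0
    hD_zero (by simp) (fun e i => e + Finsupp.single i 1) (by intro e i; simp)
    (fun I i => (C ((I i + 1 : ℕ) : ℝ))) (fun e i f => pderiv_hD e i f) const_mv l f hf

lemma wronskian_poly {l : ℕ} (f : Fin l → Polynomial ℝ) (hf : LinearIndependent ℝ f) :
    (Matrix.of fun (i j : Fin l) => Polynomial.hasseDeriv i (f j)).det ≠ 0 := by
  obtain ⟨I, hI, hdet⟩ := wronskian_abs (K := ℝ) (ι := Unit)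
    (fun _ => (Polynomial.derivative' : Derivation ℝ (Polynomial ℝ) (Polynomial ℝ)))
    (fun e f => Polynomial.hasseDeriv e f) id 0
    (by intro f; simp) (by simp) (fun e _ => e + 1) (by intro e i; simp)
    (fun e _ => ((e + 1 : ℕ) : Polynomial ℝ)) (by
      intro e i f
      have := congrArg (fun g => g f) (Polynomial.hasseDeriv_comp (R := ℝ) 1 e)
      simp [Polynomial.hasseDeriv_one] at this
      simp [Polynomial.derivative', this, add_comm]
      ring)
    (by intro a b ha h; exact const_poly a b ha (h ())) l f hf
  have hinj : Function.Injective I := by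
    intro i j hij
    by_contra hne
    exact hdet (Matrix.det_zero_of_row_eq hne (by ext x; simp [hij]))
  have : ∀ k (hk : k < l), I ⟨k, hk⟩ = k := by
    intro k
    induction k using Nat.strong_induction_on with
    | _ k ih =>
      intro hk
      have h1 := hI ⟨k, hk⟩
      simp at h1
      by_contra hne
      have h2 : I ⟨k, hk⟩ < k := by omega
      have h3 := ih _ h2 (by omega)
      have := hinj h3
      simp at this; omega
  have e : (fun (i j : Fin l) => Polynomial.hasseDeriv (I i) (f j)) =
    fun (i j : Fin l) => Polynomial.hasseDeriv i (f j) := by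
    ext1 i; ext1 j; rw [this i.1 i.2]
  rw [e] at hdet
  exact hdet

end RothAux

namespace RothAux
open MvPolynomial

/-- product of polynomials in disjoint variables -/
noncomputable def pr {n : ℕ} (f : MvPolynomial (Fin n) ℝ) (g : Polynomial ℝ) :
    MvPolynomial (Fin (n + 1)) ℝ :=
  rename Fin.succ f * Polynomial.aeval (X 0) g

lemma finSuccEquiv_pr {n : ℕ} (f : MvPolynomial (Fin n) ℝ) (g : Polynomial ℝ) :
    finSuccEquiv ℝ n (pr f g) = Polynomial.C f * g.map C := by
  rw [pr, map_mul]
  congr 1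
  · induction f using MvPolynomial.induction_on with
    | C a => simp [finSuccEquiv_apply]
    | add p q hp hq => simp only [map_add, hp, hq]
    | mul_X p i hp =>
      rw [map_mul, map_mul, hp, rename_X, finSuccEquiv_X_succ, Polynomial.C_mul]
  · induction g using Polynomial.induction_on' with
    | add p q hp hq => simp only [map_add, hp, hq, Polynomial.map_add]
    | monomial k a =>
      rw [Polynomial.aeval_monomial, map_mul, map_pow, finSuccEquiv_X_zero, Polynomial.map_monomial,
        ← Polynomial.C_mul_X_pow_eq_monomial]
      congr 1
      simp [finSuccEquiv_apply, algebraMap_eq]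

lemma coeff_pr {n : ℕ} (f : MvPolynomial (Fin n) ℝ) (g : Polynomial ℝ) (a : ℕ) (I : Fin n →₀ ℕ) :
    coeff (I.cons a) (pr f g) = coeff I f * g.coeff a := by
  rw [← finSuccEquiv_coeff_coeff, finSuccEquiv_pr, Polynomial.coeff_C_mul, Polynomial.coeff_map,
    mul_comm, coeff_C_mul, mul_comm]

lemma ext_cons {n : ℕ} {R : Type*} [CommSemiring R] {P Q : MvPolynomial (Fin (n + 1)) R}
    (h : ∀ a (I : Fin n →₀ ℕ), coeff (I.cons a) P = coeff (I.cons a) Q) : P = Q := by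
  ext J
  rw [← Finsupp.cons_tail J]; exact h _ _

lemma hD_pr {n : ℕ} (f : MvPolynomial (Fin n) ℝ) (g : Polynomial ℝ) (a : ℕ) (I : Fin n →₀ ℕ) :
    hD (I.cons a) (pr f g) = pr (hD I f) (Polynomial.hasseDeriv a g) := by
  apply ext_cons
  intro b L
  have e : L.cons b + I.cons a = (L + I).cons (b + a) := by
    ext i
    refine Fin.cases ?_ (fun i => ?_) i <;> simp
  rw [coeff_hD, e, coeff_pr, coeff_pr, coeff_hD, Polynomial.hasseDeriv_coeff, Fin.prod_univ_succ]
  simp only [Finsupp.cons_zero, Finsupp.cons_succ]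
  push_cast
  ring

lemma sh_pr {n : ℕ} (f : MvPolynomial (Fin n) ℝ) (g : Polynomial ℝ) (b : Fin (n + 1) → ℝ) :
    sh b (pr f g) = pr (sh (fun i => b i.succ) f) (Polynomial.taylor (b 0) g) := by
  rw [pr, pr, map_mul]
  congr 1
  · have : (sh b).comp (rename (Fin.succ : Fin n → Fin (n + 1))) =
        (rename (Fin.succ : Fin n → Fin (n + 1))).comp (sh (fun i => b i.succ)) := by
      ext i; simp [sh]
    exact congrArg (fun F => F f) this
  · rw [Polynomial.taylor_apply, Polynomial.aeval_comp, ← Polynomial.aeval_algHom_apply]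
    simp [sh, algebraMap_eq]

lemma pr_sum_right {n : ℕ} {ι : Type*} (s : Finset ι) (f : MvPolynomial (Fin n) ℝ)
    (g : ι → Polynomial ℝ) : pr f (∑ i ∈ s, g i) = ∑ i ∈ s, pr f (g i) := by
  simp [pr, Finset.mul_sum]

lemma decomp {n : ℕ} (P : MvPolynomial (Fin (n + 1)) ℝ) (hP : P ≠ 0) (r0 : ℕ)
    (hr : degreeOf 0 P ≤ r0) :
    ∃ l, 1 ≤ l ∧ l ≤ r0 + 1 ∧ ∃ (c : Fin l → ℕ) (ψ : Fin l → Polynomial ℝ),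
      LinearIndependent ℝ ψ ∧
      LinearIndependent ℝ (fun b => (finSuccEquiv ℝ n P).coeff (c b)) ∧
      P = ∑ b, pr ((finSuccEquiv ℝ n P).coeff (c b)) (ψ b) := by
  classical
  set φ : Fin (r0 + 1) → MvPolynomial (Fin n) ℝ := fun a => (finSuccEquiv ℝ n P).coeff a with hφ
  obtain ⟨κ, a, ainj, hspan, hli⟩ := exists_linearIndependent' ℝ φ
  have : Finite κ := Finite.of_injective a ainj
  have : Fintype κ := Fintype.ofFinite κ
  set l := Fintype.card κ with hl
  let e : Fin l ≃ κ := (Fintype.equivFin κ).symm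
  have hli2 : LinearIndependent ℝ (fun b : Fin l => φ (a (e b))) := hli.comp e e.injective
  have hmem : ∀ x : Fin (r0 + 1), ∃ t : Fin l → ℝ, ∑ b, t b • φ (a (e b)) = φ x := by
    intro x
    have h1 : φ x ∈ Submodule.span ℝ (Set.range (fun b : Fin l => φ (a (e b)))) := by
      have : Set.range (fun b : Fin l => φ (a (e b))) = Set.range (φ ∘ a) := by
        ext y; constructor
        · rintro ⟨b, rfl⟩; exact ⟨e b, rfl⟩
        · rintro ⟨k, rfl⟩; exact ⟨e.symm k, by simp⟩
      rw [this, hspan]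
      exact Submodule.subset_span ⟨x, rfl⟩
    exact (Submodule.mem_span_range_iff_exists_fun ℝ).mp h1
  choose t ht using hmem
  have htd : ∀ b b', t (a (e b)) b' = if b' = b then 1 else 0 := by
    intro b b'
    have h1 := ht (a (e b))
    have h2 : ∑ b', (t (a (e b)) b' - if b' = b then 1 else 0) • φ (a (e b')) = 0 := by
      simp only [sub_smul, Finset.sum_sub_distrib, h1]
      simp
    have := Fintype.linearIndependent_iff.mp hli2 _ h2 b'
    linarith
  have hdec : P = ∑ b : Fin l, pr (φ (a (e b)))
      (∑ x : Fin (r0 + 1), Polynomial.monomial (x : ℕ) (t x b)) := by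
    apply ext_cons
    intro k I
    rw [coeff_sum]
    simp only [coeff_pr]
    rw [← finSuccEquiv_coeff_coeff]
    have hc : ∀ b, (∑ x : Fin (r0 + 1), Polynomial.monomial (x : ℕ) (t x b)).coeff k =
        if h : k < r0 + 1 then t ⟨k, h⟩ b else 0 := by
      intro b
      rw [Polynomial.finsetSum_coeff]
      simp only [Polynomial.coeff_monomial]
      split_ifs with h
      · rw [Finset.sum_eq_single ⟨k, h⟩]
        · simp
        · intro y _ hy
          rw [if_neg]; intro h'; apply hy; ext; exact h'
        · simp
      · apply Finset.sum_eq_zero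
        intro y _; rw [if_neg]; have := y.2; omega
    simp only [hc]
    split_ifs with h
    · have := congrArg (coeff I) (ht ⟨k, h⟩)
      rw [coeff_sum] at this
      simp only [coeff_smul, smul_eq_mul] at this
      simp only [mul_comm]
      rw [this]
    · have : (finSuccEquiv ℝ n P).coeff k = 0 := by
        apply Polynomial.coeff_eq_zero_of_natDegree_lt
        rw [natDegree_finSuccEquiv]; omega
      simp [this]
  refine ⟨l, ?_, ?_, fun b => (a (e b) : ℕ), fun b =>
    ∑ x : Fin (r0 + 1), Polynomial.monomial (x : ℕ) (t x b), ?_, hli2, hdec⟩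
  · by_contra h0
    have : l = 0 := by omega
    apply hP
    rw [hdec]
    have : IsEmpty (Fin l) := by rw [this]; infer_instance
    simp
  · have := Fintype.card_le_of_injective a ainj
    simpa using this
  · rw [Fintype.linearIndependent_iff]
    intro μ hμ b
    have h1 := congrArg (fun p => Polynomial.coeff p (a (e b) : ℕ)) hμ
    simp only [Polynomial.finsetSum_coeff, Polynomial.coeff_smul, Polynomial.coeff_monomial,
      Polynomial.coeff_zero, smul_eq_mul] at h1
    have h2 : ∀ b', (∑ x : Fin (r0 + 1), if (x : ℕ) = (a (e b) : ℕ) then t x b' else 0) =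
        if b' = b then 1 else 0 := by
      intro b'
      rw [Finset.sum_eq_single (a (e b))]
      · rw [if_pos rfl, htd]
      · intro y _ hy; rw [if_neg]; intro h'; apply hy; ext; exact h'
      · simp
    simp only [h2] at h1
    simpa using h1

lemma exists_UV {n : ℕ} (P : MvPolynomial (Fin (n + 1)) ℤ) (hP : P ≠ 0) (r0 : ℕ)
    (hr : degreeOf 0 P ≤ r0) :
    ∃ l, 1 ≤ l ∧ l ≤ r0 + 1 ∧ ∃ (c : Fin l → ℕ) (I : Fin l → (Fin n →₀ ℕ)) (V : Polynomial ℝ),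
      (∀ i, (I i).degree ≤ i) ∧ V ≠ 0 ∧
      (Matrix.of fun i b => hD (I i) ((finSuccEquiv ℤ n P).coeff (c b))).det ≠ 0 ∧
      map (Int.castRingHom ℝ) (Matrix.of fun i (a : Fin l) => hD ((I i).cons (a : ℕ)) P).det =
        pr (map (Int.castRingHom ℝ)
          (Matrix.of fun i b => hD (I i) ((finSuccEquiv ℤ n P).coeff (c b))).det) V := by
  have hinj : Function.Injective (Int.castRingHom ℝ) := Int.cast_injective
  set PR := map (Int.castRingHom ℝ) P with hPR
  have hPR0 : PR ≠ 0 := by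
    intro h; apply hP; exact map_injective _ hinj (by rw [← hPR, h, map_zero])
  have hdeg : degreeOf 0 PR ≤ r0 := by
    rw [degreeOf_le_iff] at hr ⊢
    intro m hm
    exact hr m (support_map_subset _ _ hm)
  obtain ⟨l, hl1, hl2, c, ψ, hψ, hφ, hdec⟩ := decomp PR hPR0 r0 hdeg
  obtain ⟨I, hI, hU⟩ := wronskian_mv _ hφ
  have hV := wronskian_poly ψ hψ
  have hφZ : ∀ b, (finSuccEquiv ℝ n PR).coeff b =
      map (Int.castRingHom ℝ) ((finSuccEquiv ℤ n P).coeff b) := by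
    intro b; ext J
    rw [finSuccEquiv_coeff_coeff, coeff_map, coeff_map, finSuccEquiv_coeff_coeff]
  have hUmap : map (Int.castRingHom ℝ)
      (Matrix.of fun i b => hD (I i) ((finSuccEquiv ℤ n P).coeff (c b))).det =
      (Matrix.of fun i b => hD (I i) ((finSuccEquiv ℝ n PR).coeff (c b))).det := by
    rw [RingHom.map_det]
    congr 1
    ext1 i b
    simp [hφZ, hD_map]
  refine ⟨l, hl1, hl2, c, I, _, hI, hV, ?_, ?_⟩
  · intro h; rw [h, map_zero] at hUmap; exact hU hUmap.symm
  · rw [hUmap, pr, AlgHom.map_det, AlgHom.map_det, RingHom.map_det,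
      ← Matrix.det_transpose ((Polynomial.aeval (X 0)).mapMatrix _), ← Matrix.det_mul]
    congr 1
    ext1 i a
    rw [Matrix.mul_apply]
    simp only [RingHom.mapMatrix_apply, AlgHom.mapMatrix_apply, Matrix.map_apply, Matrix.of_apply,
      Matrix.transpose_apply]
    rw [← hD_map, ← hPR]
    conv_lhs => rw [hdec, map_sum]
    apply Finset.sum_congr rfl
    intro b _
    rw [hD_pr, pr]

end RothAux

namespace RothAux
open MvPolynomial

/-- weight of a multi-index -/
noncomputable def wt {n : ℕ} (r : Fin n → ℕ) (J : Fin n →₀ ℕ) : ℝ := ∑ i, (J i : ℝ) / (r i : ℝ)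

lemma wt_nonneg {n : ℕ} (r : Fin n → ℕ) (J : Fin n →₀ ℕ) : 0 ≤ wt r J :=
  Finset.sum_nonneg (fun i _ => by positivity)

lemma wt_add {n : ℕ} (r : Fin n → ℕ) (J L : Fin n →₀ ℕ) : wt r (J + L) = wt r J + wt r L := by
  simp [wt, add_div, Finset.sum_add_distrib]

lemma wt_cons {n : ℕ} (r : Fin (n + 1) → ℕ) (a : ℕ) (J : Fin n →₀ ℕ) :
    wt r (J.cons a) = (a : ℝ) / (r 0 : ℝ) + wt (fun i => r i.succ) J := by
  simp [wt, Fin.sum_univ_succ]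

/-- index at the origin is at least `t` -/
def ordge {n : ℕ} (r : Fin n → ℕ) (Q : MvPolynomial (Fin n) ℝ) (t : ℝ) : Prop :=
  ∀ J, coeff J Q ≠ 0 → t ≤ wt r J

section
variable {n : ℕ} {r : Fin n → ℕ}

lemma ordge_mul {P Q : MvPolynomial (Fin n) ℝ} {s t : ℝ} (hP : ordge r P s) (hQ : ordge r Q t) :
    ordge r (P * Q) (s + t) := by
  classical
  intro J hJ
  rw [coeff_mul] at hJ
  obtain ⟨⟨A, B⟩, hAB, hne⟩ := Finset.exists_ne_zero_of_sum_ne_zero hJ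
  rw [Finset.HasAntidiagonal.mem_antidiagonal] at hAB
  rw [← hAB, wt_add]
  exact add_le_add (hP A (left_ne_zero_of_mul hne)) (hQ B (right_ne_zero_of_mul hne))

lemma ordge_one : ordge r (1 : MvPolynomial (Fin n) ℝ) 0 := fun J _ => wt_nonneg r J

lemma ordge_prod {ι : Type*} (s : Finset ι) (f : ι → MvPolynomial (Fin n) ℝ) (t : ι → ℝ)
    (h : ∀ i ∈ s, ordge r (f i) (t i)) : ordge r (∏ i ∈ s, f i) (∑ i ∈ s, t i) := by
  classical
  induction s using Finset.induction_on with
  | empty => simpa using ordge_one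
  | insert a s ha ih =>
    rw [Finset.prod_insert ha, Finset.sum_insert ha]
    exact ordge_mul (h a (by simp)) (ih (fun i hi => h i (by simp [hi])))

lemma ordge_sum {ι : Type*} (s : Finset ι) (f : ι → MvPolynomial (Fin n) ℝ) (t : ℝ)
    (h : ∀ i ∈ s, ordge r (f i) t) : ordge r (∑ i ∈ s, f i) t := by
  intro J hJ
  rw [coeff_sum] at hJ
  obtain ⟨i, hi, hne⟩ := Finset.exists_ne_zero_of_sum_ne_zero hJ
  exact h i hi J hne

lemma ordge_det {l : ℕ} (M : Matrix (Fin l) (Fin l) (MvPolynomial (Fin n) ℝ)) (t : Fin l → ℝ)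
    (h : ∀ i a, ordge r (M i a) (t a)) : ordge r M.det (∑ a, t a) := by
  rw [Matrix.det_apply]
  apply ordge_sum
  intro τ _
  have := ordge_prod Finset.univ (fun i => M (τ i) i) t (fun i _ => h _ _)
  rcases Int.units_eq_one_or (Equiv.Perm.sign τ) with hs | hs <;> rw [hs]
  · simpa using this
  · intro J hJ; apply this J; simpa using hJ

lemma ordge_hD {Q : MvPolynomial (Fin n) ℝ} {t : ℝ} (I : Fin n →₀ ℕ) (h : ordge r Q t) :
    ordge r (hD I Q) (t - wt r I) := by
  intro J hJ
  rw [coeff_hD] at hJ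
  have := h _ (left_ne_zero_of_mul hJ)
  rw [wt_add] at this; linarith

end

lemma degreeOf_det {σ R : Type*} [CommRing R] {l : ℕ} (M : Matrix (Fin l) (Fin l) (MvPolynomial σ R))
    (j : σ) (d : ℕ) (h : ∀ i a, degreeOf j (M i a) ≤ d) : degreeOf j M.det ≤ l * d := by
  classical
  rw [Matrix.det_apply]
  refine (degreeOf_sum_le _ _ _).trans ?_
  apply Finset.sup_le
  intro τ _
  have h1 : degreeOf j (∏ i, M (τ i) i) ≤ l * d := by
    refine (degreeOf_prod_le _ _ _).trans ?_
    refine (Finset.sum_le_card_nsmul _ _ d (fun i _ => h _ _)).trans ?_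
    simp
  rcases Int.units_eq_one_or (Equiv.Perm.sign τ) with hs | hs <;> rw [hs]
  · simpa using h1
  · rw [degreeOf_le_iff] at h1 ⊢
    intro m hm
    apply h1; simpa using hm

lemma len_coeff_finSucc {n : ℕ} (P : MvPolynomial (Fin (n + 1)) ℤ) (c : ℕ) :
    len ((finSuccEquiv ℤ n P).coeff c) ≤ len P := by
  classical
  rw [len]
  have : ∑ K ∈ ((finSuccEquiv ℤ n P).coeff c).support,
      (coeff K ((finSuccEquiv ℤ n P).coeff c)).natAbs =
      ∑ J ∈ (((finSuccEquiv ℤ n P).coeff c).support).image (Finsupp.cons c),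
        (coeff J P).natAbs := by
    rw [Finset.sum_image]
    · simp only [finSuccEquiv_coeff_coeff]
    · intro a _ b _ hab
      exact Finsupp.cons_right_injective c hab
  rw [this]
  apply Finset.sum_le_sum_of_subset
  intro J hJ
  rw [Finset.mem_image] at hJ
  obtain ⟨K, hK, rfl⟩ := hJ
  rw [mem_support_iff, finSuccEquiv_coeff_coeff] at hK
  exact mem_support_iff.mpr hK

lemma len_pos {σ : Type*} (P : MvPolynomial σ ℤ) (h : P ≠ 0) : 0 < len P := by
  obtain ⟨K, hK⟩ := MvPolynomial.ne_zero_iff.mp h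
  exact lt_of_lt_of_le (Int.natAbs_pos.mpr hK) (coeff_le_len P K)

lemma uni_bound (V : Polynomial ℤ) (hV : V ≠ 0) (B : ℕ) (hB : ∀ a, (V.coeff a).natAbs ≤ B)
    (p : ℤ) (q : ℕ) (hq : 0 < q) (hpq : IsCoprime p (q : ℤ)) :
    ∃ h : ℕ, (Polynomial.taylor ((p : ℝ) / (q : ℝ)) (V.map (Int.castRingHom ℝ))).coeff h ≠ 0 ∧
      q ^ h ≤ B := by
  classical
  set β : ℝ := (p : ℝ) / (q : ℝ) with hβ
  have hVR : V.map (Int.castRingHom ℝ) ≠ 0 := by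
    rw [Ne, Polynomial.map_eq_zero_iff (Int.cast_injective)]; exact hV
  have hT : Polynomial.taylor β (V.map (Int.castRingHom ℝ)) ≠ 0 := by
    intro h; apply hVR
    exact (Polynomial.taylor_injective β) (by rw [h, map_zero])
  have hex : ∃ h, (Polynomial.taylor β (V.map (Int.castRingHom ℝ))).coeff h ≠ 0 := by
    by_contra hc; push Not at hc; exact hT (Polynomial.ext (by simpa using hc))
  refine ⟨Nat.find hex, Nat.find_spec hex, ?_⟩
  set H := Nat.find hex with hH
  have hz : ∀ d < H, (Polynomial.taylor β (V.map (Int.castRingHom ℝ))).coeff d = 0 := by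
    intro d hd; have := Nat.find_min hex hd; push Not at this; exact this
  have hdiv := Polynomial.X_pow_dvd_iff.mpr hz
  obtain ⟨G, hG⟩ := hdiv
  have hdiv2 : (Polynomial.X - Polynomial.C β) ^ H ∣ V.map (Int.castRingHom ℝ) := by
    refine ⟨Polynomial.taylor (-β) G, ?_⟩
    have := congrArg (Polynomial.taylor (-β)) hG
    rw [Polynomial.taylor_taylor] at this
    simp only [add_neg_cancel, neg_add_cancel, Polynomial.taylor_zero, LinearMap.id_apply,
      Polynomial.taylor_mul] at this
    rw [this]
    congr 1
    simp [Polynomial.taylor_apply, sub_eq_add_neg]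
  set L : Polynomial ℤ := Polynomial.C (q : ℤ) * Polynomial.X - Polynomial.C p with hL
  have hLp : L.IsPrimitive := by
    intro c hc
    rw [Polynomial.C_dvd_iff_dvd_coeff] at hc
    have h0 := hc 0
    have h1 := hc 1
    simp [hL, -Polynomial.map_intCast, -eq_intCast, Polynomial.coeff_C, -Polynomial.C_eq_intCast, -Polynomial.C_eq_natCast] at h0 h1
    exact hpq.isUnit_of_dvd' h0 h1
  have hLH : (L ^ H).IsPrimitive := by
    induction H with
    | zero => simp [Polynomial.isPrimitive_one]
    | succ k ih => rw [pow_succ]; exact (Polynomial.IsPrimitive.mul (by assumption) hLp)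
  have hq0 : (q : ℚ) ≠ 0 := by positivity
  have hdQ : (L ^ H).map (Int.castRingHom ℚ) ∣ V.map (Int.castRingHom ℚ) := by
    have e1 : (L ^ H).map (Int.castRingHom ℝ) ∣ V.map (Int.castRingHom ℝ) := by
      have e : L.map (Int.castRingHom ℝ) = Polynomial.C (q : ℝ) * (Polynomial.X - Polynomial.C β) := by
        have hqr : (q : ℝ) ≠ 0 := by positivity
        have : (p : ℝ) = q * β := by rw [hβ]; field_simp
        simp only [hL, Polynomial.map_sub, Polynomial.map_mul, Polynomial.map_C, Polynomial.map_X]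
        simp only [eq_intCast, Int.cast_natCast, this, Polynomial.C_mul, Polynomial.C_eq_natCast]
        ring
      rw [Polynomial.map_pow, e, mul_pow, ← Polynomial.C_pow]
      have hu : IsUnit (Polynomial.C ((q : ℝ) ^ H)) := by
        rw [Polynomial.isUnit_C]; exact (isUnit_iff_ne_zero.mpr (by positivity))
      exact (hu.mul_left_dvd).mpr hdiv2
    have e2 : (L ^ H).map (Int.castRingHom ℚ) ∣ V.map (Int.castRingHom ℚ) := by
      have c : (algebraMap ℚ ℝ).comp (Int.castRingHom ℚ) = Int.castRingHom ℝ := RingHom.ext_int _ _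
      rw [← c, ← Polynomial.map_map, ← Polynomial.map_map] at e1
      exact (Polynomial.map_dvd_map' _).mp e1
    exact e2
  have hd : L ^ H ∣ V :=
    (Polynomial.IsPrimitive.Int.dvd_iff_map_cast_dvd_map_cast _ _ hLH).mpr hdQ
  obtain ⟨G2, hG2⟩ := hd
  have hlc := congrArg Polynomial.leadingCoeff hG2
  rw [Polynomial.leadingCoeff_mul, Polynomial.leadingCoeff_pow] at hlc
  have hLl : L.leadingCoeff = (q : ℤ) := by
    rw [hL, sub_eq_add_neg, ← Polynomial.C_neg]
    exact Polynomial.leadingCoeff_linear (by exact_mod_cast hq.ne')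
  rw [hLl] at hlc
  have hne : V.leadingCoeff ≠ 0 := Polynomial.leadingCoeff_ne_zero.mpr hV
  have h1 : q ^ H ∣ V.leadingCoeff.natAbs := by
    rw [hlc, Int.natAbs_mul, Int.natAbs_pow, Int.natAbs_natCast]
    exact Dvd.intro _ rfl
  exact (Nat.le_of_dvd (Int.natAbs_pos.mpr hne) h1).trans (hB _)

lemma sum_bound (l r0 : ℕ) (hr : 1 ≤ r0) (hl : l ≤ r0 + 1) (x : ℝ) (hx : 0 < x)
    (hx1 : x ≤ 1) : (l : ℝ) * x ^ 2 / 8 ≤ ∑ a : Fin l, max 0 (x - (a : ℕ) / (r0 : ℝ)) := by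
  rw [Fin.sum_univ_eq_sum_range (fun a => max 0 (x - (a : ℕ) / (r0 : ℝ)))]
  have hr0 : (1 : ℝ) ≤ r0 := by exact_mod_cast hr
  have hl' : (l : ℝ) ≤ r0 + 1 := by exact_mod_cast hl
  have gen : ∀ c : ℕ, c ≤ l → (∀ a < c, (a : ℝ) ≤ x * r0 / 2) →
      (c : ℝ) * (x / 2) ≤ ∑ a ∈ Finset.range l, max 0 (x - (a : ℕ) / (r0 : ℝ)) := by
    intro c hc h
    calc (c : ℝ) * (x / 2) = ∑ a ∈ Finset.range c, x / 2 := by simp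
      _ ≤ ∑ a ∈ Finset.range c, max 0 (x - (a : ℕ) / (r0 : ℝ)) := by
        apply Finset.sum_le_sum
        intro a ha
        have h1 := h a (Finset.mem_range.mp ha)
        have : (a : ℝ) / r0 ≤ x / 2 := by rw [div_le_iff₀ (by linarith)]; linarith
        exact le_max_of_le_right (by linarith)
      _ ≤ _ := by
        apply Finset.sum_le_sum_of_subset_of_nonneg
        · exact Finset.range_subset_range.mpr hc
        · intro a _ _; exact le_max_left _ _
  have hy : 0 ≤ x * r0 / 2 := by positivity
  by_cases h : l ≤ ⌊x * r0 / 2⌋₊ + 1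
  · refine le_trans ?_ (gen l le_rfl ?_)
    · have : (0 : ℝ) ≤ l := by positivity
      nlinarith [mul_nonneg this hx.le]
    · intro a ha
      exact (Nat.le_floor_iff hy).mp (by omega)
  · refine le_trans ?_ (gen (⌊x * r0 / 2⌋₊ + 1) (by omega) ?_)
    · have h1 := Nat.lt_floor_add_one (x * r0 / 2)
      push_cast
      have : x * r0 / 2 * (x / 2) ≤ ((⌊x * r0 / 2⌋₊ : ℝ) + 1) * (x / 2) := by
        apply mul_le_mul_of_nonneg_right h1.le; positivity
      refine le_trans ?_ this
      nlinarith [sq_nonneg x]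
    · intro a ha
      exact (Nat.le_floor_iff hy).mp (by omega)

end RothAux

namespace RothAux
open MvPolynomial

/-- integer polynomial evaluated around a rational point -/
noncomputable def shZ {n : ℕ} (b : Fin n → ℝ) (P : MvPolynomial (Fin n) ℤ) :
    MvPolynomial (Fin n) ℝ := sh b (map (Int.castRingHom ℝ) P)

lemma exp_bound (l r0 S N : ℕ) (T : ℝ) (hl : l ≤ r0 + 1) (hr : (r0 : ℝ) ≤ T) (hS : (S : ℝ) ≤ T)
    (hN0 : 0 < N) (hN : Real.log N ≤ T) :
    ((l.factorial * (2 ^ S * N) ^ l : ℕ) : ℝ) ≤ Real.exp (3 * l * T) := by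
  have hlog2 : Real.log 2 ≤ 1 := by linarith [Real.log_two_lt_d9]
  have h2 : ∀ k : ℕ, (k : ℝ) ≤ T → (2 : ℝ) ^ k ≤ Real.exp T := by
    intro k hk
    calc (2 : ℝ) ^ k ≤ (Real.exp 1) ^ k := by
          apply pow_le_pow_left₀ (by norm_num)
          linarith [Real.add_one_le_exp 1]
      _ = Real.exp k := by rw [← Real.exp_nat_mul]; simp
      _ ≤ _ := Real.exp_le_exp.mpr hk
  have hN' : (N : ℝ) ≤ Real.exp T := (Real.log_le_iff_le_exp (by exact_mod_cast hN0)).mp hN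
  have hf : (l.factorial : ℝ) ≤ (Real.exp T) ^ l := by
    have h1 : l.factorial ≤ (2 ^ r0) ^ l := by
      refine (Nat.factorial_le_pow l).trans (Nat.pow_le_pow_left ?_ l)
      have := Nat.lt_two_pow_self (n := r0); omega
    calc (l.factorial : ℝ) ≤ (((2 : ℝ) ^ r0)) ^ l := by exact_mod_cast h1
      _ ≤ _ := pow_le_pow_left₀ (by positivity) (h2 r0 hr) l
  push_cast
  calc (l.factorial : ℝ) * (2 ^ S * N) ^ l ≤ (Real.exp T) ^ l * (Real.exp T * Real.exp T) ^ l := by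
        gcongr
        exact h2 S hS
    _ = _ := by
      rw [← mul_pow, ← Real.exp_add, ← Real.exp_add, ← Real.exp_nat_mul]; congr 1; ring

theorem roth_lemma (n : ℕ) : ∀ ε : ℝ, 0 < ε → ∃ σ : ℝ, 0 < σ ∧
    ∀ (r : Fin n → ℕ) (p : Fin n → ℤ) (q : Fin n → ℕ) (T : ℝ) (P : MvPolynomial (Fin n) ℤ),
      P ≠ 0 → (∀ i, 0 < r i) → (∀ i, 0 < q i) → (∀ i, IsCoprime (p i) (q i : ℤ)) →
      (∀ i, degreeOf i P ≤ r i) → (∀ i j, i < j → (r i : ℝ) ≤ σ * r j) →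
      ((∑ i, r i : ℕ) : ℝ) ≤ T → Real.log (len P) ≤ T →
      (∀ i, T ≤ σ * (r i * Real.log (q i))) →
      ∃ J, coeff J (shZ (fun i => (p i : ℝ) / (q i : ℝ)) P) ≠ 0 ∧ wt r J ≤ ε := by
  induction n with
  | zero =>
    intro ε hε
    refine ⟨1, one_pos, ?_⟩
    intro r p q T P hP _ _ _ _ _ _ _ _
    refine ⟨0, ?_, by simp [wt, hε.le]⟩
    rw [shZ, coeff_zero_sh]
    rw [eq_C_of_isEmpty P] at hP ⊢
    simp only [map_C, eval_C]
    intro h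
    apply hP
    have : coeff 0 P = 0 := by simpa using h
    rw [this, C_0]
  | succ n ih =>
    intro ε0 hε0
    set ε := min ε0 1 with hε_def
    have hε : 0 < ε := lt_min hε0 one_pos
    have hε1 : ε ≤ 1 := min_le_right _ _
    obtain ⟨σ', hσ', IH⟩ := ih (ε ^ 2 / 64) (by positivity)
    set σ := min (σ' / 3) (ε ^ 2 / 64) with hσ_def
    have hσ : 0 < σ := lt_min (by positivity) (by positivity)
    have hσ1 : 3 * σ ≤ σ' := by have := min_le_left (σ' / 3) (ε ^ 2 / 64); linarith
    have hσ2 : σ ≤ ε ^ 2 / 64 := min_le_right _ _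
    refine ⟨σ, hσ, ?_⟩
    intro r p q T P hP hr hq hpq hdeg hrat hsum hlen hT
    by_contra hcon
    push Not at hcon
    set β : Fin (n + 1) → ℝ := fun i => (p i : ℝ) / (q i : ℝ) with hβ
    obtain ⟨l, hl1, hl2, c, I, V, hI, hV, hU, hW⟩ := exists_UV P hP (r 0) (hdeg 0)
    set U := (Matrix.of fun i b => hD (I i) ((finSuccEquiv ℤ n P).coeff (c b))).det with hUdef
    set W := (Matrix.of fun i (a : Fin l) => hD ((I i).cons (a : ℕ)) P).det with hWdef
    set S := ∑ i, r i with hS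
    have hr0 : (0 : ℝ) < r 0 := by exact_mod_cast hr 0
    have hl0 : (0 : ℝ) < l := by exact_mod_cast hl1
    have hr0T : (r 0 : ℝ) ≤ T := by
      refine le_trans ?_ hsum
      exact_mod_cast Finset.single_le_sum (f := r) (fun _ _ => Nat.zero_le _) (Finset.mem_univ 0)
    have hTpos : 0 < T := lt_of_lt_of_le hr0 hr0T
    have hE := exp_bound l (r 0) S (len P) T hl2 hr0T hsum (len_pos P hP) hlen
    have hlenW : len W ≤ l.factorial * (2 ^ S * len P) ^ l := by
      apply len_det_le
      intro i a
      exact len_hD r _ P hdeg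
    have hS' : ∑ i : Fin n, r i.succ ≤ S := by rw [hS, Fin.sum_univ_succ]; omega
    have hlenU : len U ≤ l.factorial * (2 ^ S * len P) ^ l := by
      apply len_det_le
      intro i a
      refine (len_hD (fun i => r i.succ) _ _ ?_).trans ?_
      · intro j; exact (degreeOf_coeff_finSuccEquiv _ _ _).trans (hdeg _)
      · exact Nat.mul_le_mul (Nat.pow_le_pow_right (by norm_num) hS') (len_coeff_finSucc _ _)
    -- apply the induction hypothesis
    obtain ⟨L, hL, hLw⟩ := IH (fun i => l * r i.succ) (fun i => p i.succ) (fun i => q i.succ)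
      (3 * l * T) U hU (fun i => Nat.mul_pos hl1 (hr _)) (fun i => hq _) (fun i => hpq _)
      (by
        intro j
        apply degreeOf_det
        intro i a
        exact (degreeOf_hD _ _ _).trans ((degreeOf_coeff_finSuccEquiv _ _ _).trans (hdeg _)))
      (by
        intro i j hij
        have h1 := hrat i.succ j.succ (by simpa using hij)
        push_cast
        have h2 : σ * (r j.succ : ℝ) ≤ σ' * r j.succ := by
          apply mul_le_mul_of_nonneg_right _ (by positivity); linarith
        nlinarith)
      (by
        have : ((∑ i : Fin n, l * r i.succ : ℕ) : ℝ) ≤ l * T := by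
          rw [← Finset.mul_sum]; push_cast
          apply mul_le_mul_of_nonneg_left _ hl0.le
          refine le_trans ?_ hsum
          exact_mod_cast hS'
        nlinarith [mul_pos hl0 hTpos])
      (by
        rw [Real.log_le_iff_le_exp (by exact_mod_cast len_pos U hU)]
        exact le_trans (by exact_mod_cast hlenU) hE)
      (by
        intro i
        have h1 := hT i.succ
        have h2 : 0 ≤ (r i.succ : ℝ) * Real.log (q i.succ) := by
          apply mul_nonneg (by positivity)
          exact Real.log_natCast_nonneg _
        push_cast
        have h3 := mul_le_mul_of_nonneg_right hσ1 h2
        have h4 : 3 * T ≤ σ' * (r i.succ * Real.log (q i.succ)) := by linarith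
        have h5 := mul_le_mul_of_nonneg_left h4 hl0.le
        linarith)
    -- the polynomial V
    obtain ⟨I0, hI0⟩ := MvPolynomial.ne_zero_iff.mp hU
    set V' : Polynomial ℤ := ∑ a ∈ Finset.range (V.natDegree + 1),
      Polynomial.monomial a (coeff (I0.cons a) W) with hV'
    have hWc : ∀ a (K : Fin n →₀ ℕ), ((coeff (K.cons a) W : ℤ) : ℝ) = (coeff K U : ℤ) * V.coeff a := by
      intro a K
      have := congrArg (coeff (K.cons a)) hW
      rw [coeff_map, coeff_pr, coeff_map] at this
      simpa using this
    have hV'c : ∀ a, V'.coeff a = coeff (I0.cons a) W := by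
      intro a
      rw [hV', Polynomial.finsetSum_coeff]
      simp only [Polynomial.coeff_monomial]
      rw [Finset.sum_ite_eq']
      split_ifs with h
      · rfl
      · have h1 : V.coeff a = 0 := by
          apply Polynomial.coeff_eq_zero_of_natDegree_lt
          simp at h; omega
        have h2 := hWc a I0
        rw [h1, mul_zero] at h2
        exact_mod_cast h2.symm
    have hV'map : V'.map (Int.castRingHom ℝ) = Polynomial.C ((coeff I0 U : ℤ) : ℝ) * V := by
      ext a
      rw [Polynomial.coeff_map, hV'c, Polynomial.coeff_C_mul, ← hWc]; simp
    have hV'0 : V' ≠ 0 := by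
      intro h
      rw [h, Polynomial.map_zero] at hV'map
      rcases mul_eq_zero.mp hV'map.symm with h1 | h1
      · rw [Polynomial.C_eq_zero] at h1; exact hI0 (by exact_mod_cast h1)
      · exact hV h1
    obtain ⟨h, hh, hqh⟩ := uni_bound V' hV'0 (len W)
      (fun a => by rw [hV'c]; exact coeff_le_len _ _) (p 0) (q 0) (hq 0) (hpq 0)
    have hhV : (Polynomial.taylor (β 0) V).coeff h ≠ 0 := by
      intro h0
      apply hh
      rw [hV'map, Polynomial.taylor_mul, Polynomial.taylor_C, Polynomial.coeff_C_mul]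
      exact mul_eq_zero_of_right _ h0
    have hq0log : 0 < Real.log (q 0) := by
      by_contra hc
      push Not at hc
      have h1 := hT 0
      have : σ * ((r 0 : ℝ) * Real.log (q 0)) ≤ 0 :=
        mul_nonpos_of_nonneg_of_nonpos hσ.le (mul_nonpos_of_nonneg_of_nonpos hr0.le hc)
      linarith
    have hhb : (h : ℝ) / r 0 ≤ 3 * l * σ := by
      have h1 : ((q 0 : ℝ)) ^ h ≤ Real.exp (3 * l * T) :=
        le_trans (by exact_mod_cast hqh.trans hlenW) hE
      have hq0 : (0 : ℝ) < q 0 := by exact_mod_cast hq 0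
      rw [← Real.log_le_iff_le_exp (by positivity), Real.log_pow] at h1
      have h2 := mul_le_mul_of_nonneg_left (hT 0) (show (0 : ℝ) ≤ 3 * l by positivity)
      rw [div_le_iff₀ hr0]
      have h3 : (h : ℝ) * Real.log (q 0) ≤ (3 * l * σ * r 0) * Real.log (q 0) := by linarith
      exact le_of_mul_le_mul_right h3 hq0log
    -- index of W
    have hshW : shZ β W = pr (sh (fun i => β i.succ) (map (Int.castRingHom ℝ) U))
        (Polynomial.taylor (β 0) V) := by
      rw [shZ, hW, sh_pr]
    have hne : coeff (L.cons h) (shZ β W) ≠ 0 := by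
      rw [hshW, coeff_pr]; exact mul_ne_zero hL hhV
    have hwtL : wt (fun i => r i.succ) L ≤ l * (ε ^ 2 / 64) := by
      have : wt (fun i => l * r i.succ) L = (l : ℝ)⁻¹ * wt (fun i => r i.succ) L := by
        simp only [wt, Finset.mul_sum]
        apply Finset.sum_congr rfl
        intro i _
        push_cast
        rw [div_mul_eq_div_div_swap, div_eq_inv_mul]
      rw [this, inv_mul_le_iff₀ hl0] at hLw
      exact hLw
    have hord : ordge r (shZ β P) ε := by
      intro J hJ
      exact (min_le_left _ _).trans (hcon J hJ).le
    have hdetW : shZ β W =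
        (Matrix.of fun i (a : Fin l) => hD ((I i).cons (a : ℕ)) (shZ β P)).det := by
      rw [shZ, hWdef, RingHom.map_det, AlgHom.map_det]
      congr 1
      ext1 i a
      simp only [RingHom.mapMatrix_apply, AlgHom.mapMatrix_apply, Matrix.map_apply, Matrix.of_apply]
      rw [shZ, hD_sh, hD_map]
    have hwI : ∀ i, wt (fun i => r i.succ) (I i) ≤ σ := by
      intro i
      have h1 : ∀ j : Fin n, (I i j : ℝ) / r j.succ ≤ (I i j : ℝ) * (σ / r 0) := by
        intro j
        have h2 := hrat 0 j.succ (Fin.succ_pos j)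
        have h3 : (0 : ℝ) < r j.succ := by exact_mod_cast hr _
        rw [div_eq_mul_inv]
        apply mul_le_mul_of_nonneg_left _ (by positivity)
        rw [inv_eq_one_div, div_le_div_iff₀ h3 hr0]; linarith
      have h2 : ((I i).degree : ℝ) ≤ r 0 := by
        have a1 := hI i
        have a2 := i.2
        exact_mod_cast (show (I i).degree ≤ r 0 by omega)
      calc wt (fun i => r i.succ) (I i) ≤ ∑ j, (I i j : ℝ) * (σ / r 0) :=
            Finset.sum_le_sum (fun j _ => h1 j)
        _ = ((I i).degree : ℝ) * (σ / r 0) := by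
            rw [← Finset.sum_mul, Finsupp.degree_eq_sum]; push_cast; rfl
        _ ≤ r 0 * (σ / r 0) := mul_le_mul_of_nonneg_right h2 (by positivity)
        _ = σ := by field_simp
    have hge : ordge r (shZ β W) (∑ a : Fin l, max 0 ((ε - σ) - (a : ℕ) / (r 0 : ℝ))) := by
      rw [hdetW]
      apply ordge_det
      intro i a
      have h1 := ordge_hD ((I i).cons (a : ℕ)) hord
      intro J hJ
      have h2 := h1 J hJ
      rw [wt_cons] at h2
      have h3 := hwI i
      exact max_le (wt_nonneg _ _) (by linarith)
    have f1 := hge _ hne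
    rw [wt_cons] at f1
    have hε2 : ε ^ 2 ≤ ε := by nlinarith
    have f2 := sum_bound l (r 0) (hr 0) hl2 (ε - σ) (by linarith) (by linarith)
    have f3 : (l : ℝ) * (ε - σ) ^ 2 / 8 ≤ l * (3 * σ + ε ^ 2 / 64) := by linarith
    have f4 : (ε - σ) ^ 2 / 8 ≤ 3 * σ + ε ^ 2 / 64 := by
      rw [mul_div_assoc] at f3
      exact le_of_mul_le_mul_left f3 hl0
    have f5 : (63 / 64 * ε) ^ 2 ≤ (ε - σ) ^ 2 := by
      apply pow_le_pow_left₀ (by positivity); linarith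
    nlinarith [sq_pos_of_pos hε]

end RothAux
namespace RothAux
open MvPolynomial

lemma avg_exp (r : ℕ) (hr : 0 < r) (l : ℝ) :
    ∑ a : Fin (r+1), Real.exp (l * (1/2 - (a:ℕ)/(r:ℝ))) ≤ (r+1) * Real.exp (l^2/8) := by
  have hr' : (0:ℝ) < r := by exact_mod_cast hr
  have h1 : ∑ a : Fin (r+1), Real.exp (l * (1/2 - (a:ℕ)/(r:ℝ)))
      = ∑ a : Fin (r+1), Real.exp (-(l * (1/2 - (a:ℕ)/(r:ℝ)))) := by
    rw [← Equiv.sum_comp Fin.revPerm]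
    refine Finset.sum_congr rfl fun a _ => ?_
    congr 1
    have : (a:ℕ) ≤ r := by have := a.2; omega
    simp only [Fin.revPerm_apply, Fin.val_rev]
    rw [show r + 1 - ((a:ℕ)+1) = r - a by omega, Nat.cast_sub this]
    field_simp
    ring
  have h2 : 2 * ∑ a : Fin (r+1), Real.exp (l * (1/2 - (a:ℕ)/(r:ℝ)))
      ≤ ∑ a : Fin (r+1), 2 * Real.exp (l^2/8) := by
    rw [two_mul]
    nth_rewrite 2 [h1]
    rw [← Finset.sum_add_distrib]
    refine Finset.sum_le_sum fun a _ => ?_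
    have h3 := Real.cosh_le_exp_half_sq (l * (1/2 - (a:ℕ)/(r:ℝ)))
    rw [Real.cosh_eq] at h3
    have ha : (a:ℕ) ≤ r := by have := a.2; omega
    have ha' : ((a:ℕ):ℝ)/r ≤ 1 := by rw [div_le_one hr']; exact_mod_cast ha
    have ha0 : 0 ≤ ((a:ℕ):ℝ)/r := by positivity
    have h4 : Real.exp ((l * (1/2 - (a:ℕ)/(r:ℝ)))^2/2) ≤ Real.exp (l^2/8) := by
      apply Real.exp_le_exp.mpr
      have : (1/2 - ((a:ℕ):ℝ)/r)^2 ≤ 1/4 := by nlinarith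
      rw [mul_pow]
      nlinarith [sq_nonneg l]
    linarith
  rw [Finset.sum_const] at h2
  simp only [Finset.card_univ, Fintype.card_fin, nsmul_eq_mul] at h2
  push_cast at h2
  linarith

lemma count_bound {m : ℕ} (r : Fin m → ℕ) (hr : ∀ i, 0 < r i) (η : ℝ) (hη : 0 < η) :
    (Fintype.card {J : (i : Fin m) → Fin (r i + 1) //
      ∑ i, ((J i : ℕ) : ℝ) / (r i : ℝ) < m * (1/2 - η)} : ℝ)
      ≤ (∏ i, ((r i : ℝ) + 1)) * Real.exp (-2 * η^2 * m) := by
  rw [Fintype.card_subtype]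
  have h1 : ((Finset.univ.filter (fun J : (i : Fin m) → Fin (r i + 1) =>
      ∑ i, ((J i : ℕ) : ℝ) / (r i : ℝ) < m * (1/2 - η))).card : ℝ) ≤
      ∑ J : (i : Fin m) → Fin (r i + 1),
        Real.exp (-4*η^2*m) * ∏ i, Real.exp (4*η * (1/2 - (J i : ℕ)/(r i:ℝ))) := by
    rw [Finset.card_eq_sum_ones, Finset.sum_filter]
    push_cast
    refine Finset.sum_le_sum fun J _ => ?_
    split_ifs with h
    · rw [← Real.exp_sum, ← Real.exp_add]
      apply Real.one_le_exp
      rw [← Finset.mul_sum, Finset.sum_sub_distrib]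
      simp only [Finset.sum_const, Finset.card_univ, Fintype.card_fin, nsmul_eq_mul]
      nlinarith
    · positivity
  refine h1.trans ?_
  rw [← Finset.mul_sum]
  have h2 := Finset.prod_univ_sum (fun i : Fin m => (Finset.univ : Finset (Fin (r i + 1))))
    (fun i a => Real.exp (4*η * (1/2 - (a : ℕ)/(r i:ℝ))))
  rw [Fintype.piFinset_univ] at h2
  rw [← h2]
  have h3 : ∏ i, ∑ a : Fin (r i + 1), Real.exp (4*η * (1/2 - (a : ℕ)/(r i:ℝ))) ≤
      ∏ i : Fin m, (((r i : ℝ) + 1) * Real.exp ((4*η)^2/8)) :=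
    Finset.prod_le_prod (fun i _ => by positivity) (fun i _ => avg_exp (r i) (hr i) _)
  refine (mul_le_mul_of_nonneg_left h3 (Real.exp_pos _).le).trans ?_
  rw [Finset.prod_mul_distrib, Finset.prod_const, ← Real.exp_nat_mul, mul_left_comm,
    ← Real.exp_add]
  simp only [Finset.card_univ, Fintype.card_fin]
  apply le_of_eq
  congr 2
  ring

end RothAux
namespace RothAux
open MvPolynomial
attribute [local instance] Matrix.seminormedAddCommGroup

/-- exponent vector of a box element -/
noncomputable def toF {m : ℕ} {r : Fin m → ℕ} (K : (i : Fin m) → Fin (r i + 1)) : Fin m →₀ ℕ :=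
  Finsupp.equivFunOnFinite.symm (fun i => ((K i : ℕ)))

lemma toF_apply {m : ℕ} {r : Fin m → ℕ} (K : (i : Fin m) → Fin (r i + 1)) (i : Fin m) :
    toF K i = (K i : ℕ) := rfl

lemma toF_inj {m : ℕ} {r : Fin m → ℕ} : Function.Injective (toF (r := r)) := by
  intro K L h
  funext i
  apply Fin.ext
  have := DFunLike.congr_fun h i
  simpa [toF_apply] using this

/-- entries of the linear system -/
noncomputable def ent (s k : ℕ) {m : ℕ} (J K : Fin m →₀ ℕ) (ρ : ℕ) : ℤ :=
  if (∑ i, (K i - J i)) % s = ρ then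
    ((∏ i, (K i).choose (J i) : ℕ) : ℤ) * (k : ℤ) ^ ((∑ i, (K i - J i)) / s) else 0

lemma ent_bound (s k : ℕ) (hk : 1 ≤ k) {m : ℕ} (r : Fin m → ℕ) (J K : Fin m →₀ ℕ) (ρ : ℕ)
    (hK : ∀ i, K i ≤ r i) : |((ent s k J K ρ : ℤ) : ℝ)| ≤ (2 * k : ℝ) ^ (∑ i, r i) := by
  unfold ent
  have hk' : (1:ℝ) ≤ k := by exact_mod_cast hk
  split_ifs
  · push_cast
    rw [abs_of_nonneg (by positivity), mul_pow]
    refine mul_le_mul ?_ ?_ (by positivity) (by positivity)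
    · rw [← Finset.prod_pow_eq_pow_sum]
      refine Finset.prod_le_prod (fun i _ => by positivity) (fun i _ => ?_)
      have h1 : (K i).choose (J i) ≤ 2 ^ (r i) :=
        (Nat.choose_le_two_pow _ _).trans (Nat.pow_le_pow_right (by norm_num) (hK i))
      exact_mod_cast h1
    · apply pow_le_pow_right₀ hk'
      refine (Nat.div_le_self _ _).trans (Finset.sum_le_sum fun i _ => ?_)
      have := hK i
      omega
  · simp

lemma aux_poly (s k : ℕ) (hs : 1 ≤ s) (hk : 1 ≤ k) (α : ℝ) (hα : α ^ s = k) (η : ℝ) (hη : 0 < η)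
    (hη2 : η < 1/2) {m : ℕ} (hm : 1 ≤ m) (hm2 : s * Real.exp (-2 * η^2 * m) ≤ 1/2)
    (r : Fin m → ℕ) (hr : ∀ i, 0 < r i) :
    ∃ P : MvPolynomial (Fin m) ℤ, P ≠ 0 ∧ (∀ i, degreeOf i P ≤ r i) ∧
      len P ≤ (8 * k) ^ (∑ i, r i) ∧
      ordge r (shZ (fun _ => α) P) (m * (1/2 - η)) := by
  classical
  let cols := (i : Fin m) → Fin (r i + 1)
  let Js := {J : cols // ∑ i, ((J i : ℕ) : ℝ) / (r i : ℝ) < m * (1/2 - η)}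
  let rows := Js × Fin s
  let A : Matrix rows cols ℤ := fun R K => ent s k (toF R.1.1) (toF K) R.2
  have hmpos : (0:ℝ) < m := by exact_mod_cast hm
  have hcols : Fintype.card cols = ∏ i, (r i + 1) := by simp [cols]
  have hcols' : (Fintype.card cols : ℝ) = ∏ i, ((r i : ℝ) + 1) := by rw [hcols]; push_cast; rfl
  have hcpos : (0:ℝ) < Fintype.card cols := by rw [hcols']; positivity
  have hcb : (Fintype.card cols : ℝ) ≤ 2 ^ (∑ i, r i) := by
    rw [hcols', ← Finset.prod_pow_eq_pow_sum]
    refine Finset.prod_le_prod (fun i _ => by positivity) (fun i _ => ?_)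
    have : r i + 1 ≤ 2 ^ (r i) := Nat.lt_two_pow_self
    exact_mod_cast this
  have hrows : (Fintype.card rows : ℝ) ≤ Fintype.card cols / 2 := by
    have h1 : Fintype.card rows = Fintype.card Js * s := by simp [rows]
    rw [h1]
    push_cast
    have h2 := count_bound r hr η hη
    rw [← hcols'] at h2
    have h3 := mul_le_mul_of_nonneg_right h2 (Nat.cast_nonneg (α := ℝ) s)
    refine h3.trans ?_
    nlinarith
  have hrp : 0 < Fintype.card rows := by
    rw [Fintype.card_pos_iff]
    refine ⟨⟨⟨fun i => 0, ?_⟩, ⟨0, hs⟩⟩⟩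
    simp
    nlinarith
  have hlt : Fintype.card rows < Fintype.card cols := by
    have : (Fintype.card rows : ℝ) < Fintype.card cols := by linarith
    exact_mod_cast this
  obtain ⟨t, ht0, hAt, htn⟩ := Int.Matrix.exists_ne_zero_int_vec_norm_le A hlt hrp
  have hk' : (1:ℝ) ≤ k := by exact_mod_cast hk
  have hA : max 1 ‖A‖ ≤ (2 * k : ℝ) ^ (∑ i, r i) := by
    refine max_le (one_le_pow₀ (by linarith)) ?_
    rw [Matrix.norm_le_iff (by positivity)]
    intro R K
    rw [Int.norm_eq_abs]
    exact ent_bound s k hk r _ _ _ (fun i => by rw [toF_apply]; have := (K i).2; omega)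
  have hbase : (1:ℝ) ≤ Fintype.card cols * max 1 ‖A‖ := by
    have h1 : (1:ℝ) ≤ Fintype.card cols := by
      have : 0 < Fintype.card cols := by omega
      exact_mod_cast this
    exact one_le_mul_of_one_le_of_one_le h1 (le_max_left _ _)
  have htb : ‖t‖ ≤ (4 * k : ℝ) ^ (∑ i, r i) := by
    refine htn.trans ?_
    have h1 : ((Fintype.card cols : ℝ) * max 1 ‖A‖) ^ ((Fintype.card rows : ℝ) /
        ((Fintype.card cols : ℝ) - Fintype.card rows)) ≤
        ((Fintype.card cols : ℝ) * max 1 ‖A‖) ^ (1:ℝ) := by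
      apply Real.rpow_le_rpow_of_exponent_le hbase
      rw [div_le_one (by linarith)]
      linarith
    refine h1.trans ?_
    rw [Real.rpow_one, show (4 * k : ℝ) = 2 * (2 * k) by ring, mul_pow]
    exact mul_le_mul hcb hA (by positivity) (by positivity)
  let P : MvPolynomial (Fin m) ℤ := ∑ K : cols, monomial (toF K) (t K)
  have hcoeff : ∀ K : cols, coeff (toF K) P = t K := by
    intro K
    simp only [P, coeff_sum, coeff_monomial]
    rw [Finset.sum_eq_single K]
    · simp
    · intro L _ hL
      rw [if_neg (fun h => hL (toF_inj h))]
    · simp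
  refine ⟨P, ?_, ?_, ?_, ?_⟩
  · intro h
    apply ht0
    funext K
    rw [← hcoeff K, h]; simp
  · intro i
    refine (degreeOf_sum_le i _ _).trans (Finset.sup_le fun K _ => ?_)
    rw [degreeOf_le_iff]
    intro L hL
    have := support_monomial_subset hL
    rw [Finset.mem_singleton] at this
    rw [this, toF_apply]
    have := (K i).2
    omega
  · have h1 : (len P : ℝ) ≤ (8 * k : ℝ) ^ (∑ i, r i) := by
      calc (len P : ℝ) ≤ ((∑ K : cols, (t K).natAbs : ℕ) : ℝ) := by
            norm_cast
            exact (len_sum _ _).trans (Finset.sum_le_sum fun K _ => len_monomial_le _ _)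
        _ ≤ ∑ K : cols, (4 * k : ℝ) ^ (∑ i, r i) := by
            push_cast
            refine Finset.sum_le_sum fun K _ => ?_
            have h2 := norm_le_pi_norm t K
            rw [Int.norm_eq_abs] at h2
            rw [Nat.cast_natAbs, Int.cast_abs]
            exact h2.trans htb
        _ = Fintype.card cols * (4 * k : ℝ) ^ (∑ i, r i) := by
            rw [Finset.sum_const, nsmul_eq_mul, Finset.card_univ]
        _ ≤ 2 ^ (∑ i, r i) * (4 * k : ℝ) ^ (∑ i, r i) := by gcongr
        _ = _ := by rw [← mul_pow]; ring
    exact_mod_cast h1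
  · intro J hJ
    by_contra hlt
    push Not at hlt
    apply hJ
    rw [shZ, coeff_sh]
    have hP : eval (fun _ => α) (hD J (map (Int.castRingHom ℝ) P)) =
        ∑ K : cols, (t K : ℝ) * ((∏ i, (K i : ℕ).choose (J i) : ℕ) : ℝ) *
          α ^ (∑ i, ((K i : ℕ) - J i)) := by
      simp only [P, map_sum, map_monomial, hD_monomial, eval_monomial]
      refine Finset.sum_congr rfl fun K _ => ?_
      rw [Finsupp.prod_pow, Finset.prod_pow_eq_pow_sum]
      simp [toF_apply]
    rw [hP]
    by_cases hbox : ∀ i, J i ≤ r i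
    · let J' : cols := fun i => ⟨J i, by have := hbox i; omega⟩
      have hJ' : toF J' = J := by ext i; simp [toF_apply, J']
      have hwt : ∑ i, ((J' i : ℕ) : ℝ) / (r i : ℝ) < m * (1/2 - η) := by
        simpa [wt, J'] using hlt
      have hrow : ∀ ρ : Fin s, ∑ K : cols, (ent s k J (toF K) ρ : ℝ) * t K = 0 := by
        intro ρ
        have := congrFun hAt (⟨J', hwt⟩, ρ)
        simp only [Matrix.mulVec, dotProduct, A, hJ', Pi.zero_apply] at this
        exact_mod_cast this
      have hterm : ∀ K : cols, (t K : ℝ) * ((∏ i, (K i : ℕ).choose (J i) : ℕ) : ℝ) *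
          α ^ (∑ i, ((K i : ℕ) - J i)) = ∑ ρ : Fin s, α ^ (ρ : ℕ) *
            ((ent s k J (toF K) ρ : ℝ) * t K) := by
        intro K
        set e := ∑ i, ((K i : ℕ) - J i) with he
        have h1 : α ^ e = (k:ℝ) ^ (e / s) * α ^ (e % s) := by
          rw [← hα, ← pow_mul, ← pow_add, Nat.div_add_mod]
        rw [Finset.sum_eq_single ⟨e % s, Nat.mod_lt _ hs⟩]
        · simp only [ent, toF_apply, ← he, if_true]
          rw [h1]; push_cast; ring
        · intro ρ _ hρ
          have : ¬ (e % s = ρ) := fun h => hρ (Fin.ext h.symm)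
          simp only [ent, toF_apply, ← he, if_neg this]
          simp
        · simp
      rw [Finset.sum_congr rfl (fun K _ => hterm K), Finset.sum_comm]
      refine Finset.sum_eq_zero fun ρ _ => ?_
      rw [← Finset.mul_sum, hrow, mul_zero]
    · push Not at hbox
      obtain ⟨i, hi⟩ := hbox
      refine Finset.sum_eq_zero fun K _ => ?_
      rw [Finset.prod_eq_zero (Finset.mem_univ i) (Nat.choose_eq_zero_of_lt
        (by have := (K i).2; omega))]
      simp

end RothAux
namespace RothAux
open MvPolynomial

lemma eval_sh {σ R : Type*} [CommRing R] (b c : σ → R) (P : MvPolynomial σ R) :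
    eval c (sh b P) = eval (fun i => c i + b i) P := by
  induction P using MvPolynomial.induction_on with
  | C a => simp [sh]
  | add p q hp hq => simp [hp, hq]
  | mul_X p i hp => rw [map_mul, map_mul, hp, map_mul]; simp [sh]

lemma eval_map_int {m : ℕ} (b : Fin m → ℝ) (Q : MvPolynomial (Fin m) ℤ) :
    eval b (map (Int.castRingHom ℝ) Q) = ∑ K ∈ Q.support, ((coeff K Q : ℤ) : ℝ) * ∏ i, b i ^ (K i) := by
  rw [eval_map, eval₂_eq']; simp

lemma abs_eval_le {m : ℕ} (r : Fin m → ℕ) (Q : MvPolynomial (Fin m) ℤ)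
    (hQ : ∀ i, degreeOf i Q ≤ r i) (α A : ℝ) (hA : 1 ≤ A) (hαA : |α| ≤ A) :
    |eval (fun _ => α) (map (Int.castRingHom ℝ) Q)| ≤ len Q * A ^ (∑ i, r i) := by
  rw [eval_map_int]
  refine (Finset.abs_sum_le_sum_abs _ _).trans ?_
  rw [len]
  push_cast
  rw [Finset.sum_mul]
  refine Finset.sum_le_sum fun K hK => ?_
  rw [abs_mul, Nat.cast_natAbs, Int.cast_abs]
  refine mul_le_mul_of_nonneg_left ?_ (abs_nonneg _)
  rw [Finset.prod_pow_eq_pow_sum, abs_pow]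
  refine (pow_le_pow_left₀ (abs_nonneg _) hαA _).trans (pow_le_pow_right₀ hA ?_)
  exact Finset.sum_le_sum fun i _ => (degreeOf_le_iff.mp (hQ i)) K hK

lemma lower_bound {m : ℕ} (r q : Fin m → ℕ) (p : Fin m → ℤ) (hq : ∀ i, 0 < q i)
    (Q : MvPolynomial (Fin m) ℤ) (hQ : ∀ i, degreeOf i Q ≤ r i)
    (h0 : eval (fun i => (p i : ℝ) / (q i : ℝ)) (map (Int.castRingHom ℝ) Q) ≠ 0) :
    1 ≤ |eval (fun i => (p i : ℝ) / (q i : ℝ)) (map (Int.castRingHom ℝ) Q)| *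
      ∏ i, (q i : ℝ) ^ (r i) := by
  have hqp : (0:ℝ) < ∏ i, (q i : ℝ) ^ (r i) :=
    Finset.prod_pos fun i _ => pow_pos (by exact_mod_cast hq i) _
  have h1 : eval (fun i => (p i : ℝ) / (q i : ℝ)) (map (Int.castRingHom ℝ) Q) *
      ∏ i, (q i : ℝ) ^ (r i) =
      ((∑ K ∈ Q.support, coeff K Q * ∏ i, (p i) ^ (K i) * (q i : ℤ) ^ (r i - K i) : ℤ) : ℝ) := by
    rw [eval_map_int, Finset.sum_mul]
    push_cast
    refine Finset.sum_congr rfl fun K hK => ?_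
    rw [mul_assoc, ← Finset.prod_mul_distrib]
    congr 1
    refine Finset.prod_congr rfl fun i _ => ?_
    have h2 : K i ≤ r i := (degreeOf_le_iff.mp (hQ i)) K hK
    have h3 : (q i : ℝ) ≠ 0 := by have := hq i; positivity
    have h4 : (q i : ℝ) ^ (r i) = (q i : ℝ) ^ (K i) * (q i : ℝ) ^ (r i - K i) := by
      rw [← pow_add]; congr 1; omega
    rw [h4, div_pow, ← mul_assoc, div_mul_cancel₀ _ (pow_ne_zero _ h3)]
  rw [← abs_of_pos hqp, ← abs_mul, h1]
  have h5 : (∑ K ∈ Q.support, coeff K Q * ∏ i, (p i) ^ (K i) * (q i : ℤ) ^ (r i - K i) : ℤ) ≠ 0 := by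
    intro h
    rw [h] at h1
    have := mul_ne_zero h0 hqp.ne'
    apply this
    rw [h1]; simp
  have h6 := Int.one_le_abs h5
  rw [← Int.cast_abs]
  exact_mod_cast h6

lemma upper_bound {m : ℕ} (r : Fin m → ℕ) (hr : ∀ i, 0 < r i)
    (Q : MvPolynomial (Fin m) ℤ) (hQ : ∀ i, degreeOf i Q ≤ r i) (α A : ℝ) (hA : 1 ≤ A)
    (hαA : |α| ≤ A) (θ G : ℝ) (hG : 0 ≤ G) (hord : ordge r (shZ (fun _ => α) Q) θ)
    (b : Fin m → ℝ) (hb : ∀ i, |b i - α| ≤ Real.exp (-G / r i)) :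
    |eval b (map (Int.castRingHom ℝ) Q)| ≤
      2 ^ (∑ i, r i) * (2 ^ (∑ i, r i) * len Q * A ^ (∑ i, r i)) * Real.exp (-G * θ) := by
  classical
  have h1 : eval b (map (Int.castRingHom ℝ) Q) = eval (fun i => b i - α) (shZ (fun _ => α) Q) := by
    rw [shZ, eval_sh]; simp
  rw [h1, eval_eq']
  have hcoef : ∀ K, |coeff K (shZ (fun _ => α) Q)| ≤ 2 ^ (∑ i, r i) * len Q * A ^ (∑ i, r i) := by
    intro K
    rw [shZ, coeff_sh, hD_map]
    have h2 := abs_eval_le r (hD K Q) (fun i => (degreeOf_hD i K Q).trans (by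
      have := hQ i; omega)) α A hA hαA
    refine h2.trans ?_
    have h3 := len_hD r K Q hQ
    have h3' : (len (hD K Q) : ℝ) ≤ 2 ^ (∑ i, r i) * len Q := by exact_mod_cast h3
    gcongr
  have hterm : ∀ K ∈ (shZ (fun _ => α) Q).support,
      |coeff K (shZ (fun _ => α) Q) * ∏ i, (b i - α) ^ (K i)| ≤
      (2 ^ (∑ i, r i) * len Q * A ^ (∑ i, r i)) * Real.exp (-G * θ) := by
    intro K hK
    rw [abs_mul]
    refine mul_le_mul (hcoef K) ?_ (abs_nonneg _) (by positivity)
    rw [Finset.abs_prod]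
    have h4 : θ ≤ wt r K := hord K (mem_support_iff.mp hK)
    calc ∏ i, |(b i - α) ^ (K i)| ≤ ∏ i, Real.exp (-G / r i) ^ (K i) := by
          refine Finset.prod_le_prod (fun i _ => abs_nonneg _) (fun i _ => ?_)
          rw [abs_pow]
          exact pow_le_pow_left₀ (abs_nonneg _) (hb i) _
      _ = Real.exp (-G * wt r K) := by
          rw [wt, Finset.mul_sum, Real.exp_sum]
          refine Finset.prod_congr rfl fun i _ => ?_
          rw [← Real.exp_nat_mul]; congr 1; ring
      _ ≤ _ := by
          apply Real.exp_le_exp.mpr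
          nlinarith
  refine (Finset.abs_sum_le_sum_abs _ _).trans ((Finset.sum_le_sum hterm).trans ?_)
  rw [Finset.sum_const, nsmul_eq_mul, ← mul_assoc]
  refine mul_le_mul_of_nonneg_right (mul_le_mul_of_nonneg_right ?_ (by positivity))
    (Real.exp_pos _).le
  have hsub : (shZ (fun _ => α) Q).support ⊆
      (Finset.univ : Finset ((i : Fin m) → Fin (r i + 1))).image toF := by
    intro K hK
    rw [mem_support_iff, shZ, coeff_sh, hD_map] at hK
    have hbox : ∀ i, K i ≤ r i := by
      by_contra hc
      push Not at hc
      obtain ⟨i, hi⟩ := hc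
      apply hK
      have : hD K Q = 0 := by
        ext L
        rw [coeff_hD]
        have h7 : coeff (L + K) Q = 0 := by
          by_contra h8
          have := (degreeOf_le_iff.mp (hQ i)) (L + K) (mem_support_iff.mpr h8)
          simp at this
          omega
        rw [h7]; simp
      rw [this]; simp
    rw [Finset.mem_image]
    refine ⟨fun i => ⟨K i, by have := hbox i; omega⟩, Finset.mem_univ _, ?_⟩
    ext i; simp [toF_apply]
  have hcard := (Finset.card_le_card hsub).trans Finset.card_image_le
  rw [Finset.card_univ] at hcard
  have h9 : Fintype.card ((i : Fin m) → Fin (r i + 1)) ≤ 2 ^ (∑ i, r i) := by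
    rw [Fintype.card_pi, ← Finset.prod_pow_eq_pow_sum]
    refine Finset.prod_le_prod' (fun i _ => ?_)
    rw [Fintype.card_fin]
    exact Nat.lt_two_pow_self
  exact_mod_cast hcard.trans h9

end RothAux
namespace RothAux
open MvPolynomial

lemma seq_exists (S : ℤ → ℕ → Prop) (hS : ∀ x : ℝ, ∃ p q, S p q ∧ x ≤ Real.log q)
    (L D : ℝ) (hL : 0 ≤ L) (hD : 1 ≤ D) (m : ℕ) :
    ∃ (p : Fin m → ℤ) (q : Fin m → ℕ), (∀ i, S (p i) (q i)) ∧ (∀ i, L ≤ Real.log (q i)) ∧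
      ∀ i j, i < j → D * Real.log (q j) ≤ Real.log (q i) := by
  choose fp fq hf1 hf2 using hS
  let x : ℕ → ℝ := fun n => Nat.rec L (fun _ y => D * Real.log (fq y)) n
  have hx0 : x 0 = L := rfl
  have hxs : ∀ n, x (n+1) = D * Real.log (fq (x n)) := fun n => rfl
  let u : ℕ → ℝ := fun n => Real.log (fq (x n))
  have hu : ∀ n, x n ≤ u n := fun n => hf2 _
  have hu' : ∀ n, D * u n ≤ u (n+1) := fun n => by
    have := hu (n+1); rw [hxs] at this; exact this
  have hu0 : ∀ n, L ≤ u n := by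
    intro n
    induction n with
    | zero => exact hu 0
    | succ n ih =>
      have := hu' n
      nlinarith
  have hmono : Monotone u := monotone_nat_of_le_succ fun n => by
    have h1 := hu' n
    have h2 := hu0 n
    nlinarith
  refine ⟨fun i => fp (x (Fin.rev i : Fin m)), fun i => fq (x (Fin.rev i : Fin m)),
    fun i => hf1 _, fun i => hu0 _, ?_⟩
  intro i j hij
  have h1 : ((Fin.rev j : Fin m) : ℕ) + 1 ≤ (Fin.rev i : Fin m) := by
    have := Fin.rev_lt_rev.mpr hij
    exact this
  exact (hu' _).trans (hmono h1)

set_option maxHeartbeats 2000000 in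
theorem roth (s k : ℕ) (hs : 1 ≤ s) (hk : 1 ≤ k) (α : ℝ) (hα : α ^ s = k) (δ : ℝ) (hδ : 0 < δ)
    (hδ1 : δ ≤ 1) : ∃ Q0 : ℕ, ∀ (p : ℤ) (q : ℕ), Q0 ≤ q → 0 < q → IsCoprime p (q : ℤ) →
      (q : ℝ) ^ (-(2 + δ)) ≤ |(p : ℝ) / q - α| := by
  by_contra hcon
  push Not at hcon
  obtain ⟨η, hη⟩ : ∃ η, η = δ / 24 := ⟨_, rfl⟩
  obtain ⟨ν, hν⟩ : ∃ ν, ν = δ / 16 := ⟨_, rfl⟩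
  have hη0 : 0 < η := by rw [hη]; positivity
  have hν0 : 0 < ν := by rw [hν]; positivity
  have hs' : (1:ℝ) ≤ s := by exact_mod_cast hs
  have hk' : (1:ℝ) ≤ k := by exact_mod_cast hk
  obtain ⟨m, hm, hm2⟩ : ∃ m : ℕ, 1 ≤ m ∧ s * Real.exp (-2 * η^2 * m) ≤ 1/2 := by
    obtain ⟨m, hm⟩ := exists_nat_ge (2 * s / (2 * η^2))
    have h0 : (0:ℝ) < 2 * s / (2 * η^2) := by positivity
    refine ⟨m, ?_, ?_⟩
    · have : (0:ℝ) < m := by linarith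
      exact_mod_cast this
    · rw [div_le_iff₀ (by positivity)] at hm
      have h1 := Real.add_one_le_exp (2 * η^2 * m)
      have h2 : 2 * (s:ℝ) ≤ Real.exp (2 * η^2 * m) := by linarith
      rw [show -2 * η^2 * m = -(2 * η^2 * m) by ring, Real.exp_neg, ← div_eq_mul_inv,
        div_le_iff₀ (Real.exp_pos _)]
      linarith
  have hm' : (1:ℝ) ≤ m := by exact_mod_cast hm
  obtain ⟨σ, hσ, hroth⟩ := roth_lemma m η hη0
  obtain ⟨A, hA⟩ : ∃ A, A = max 1 |α| := ⟨_, rfl⟩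
  have hA1 : 1 ≤ A := by rw [hA]; exact le_max_left _ _
  have hA2 : |α| ≤ A := by rw [hA]; exact le_max_right _ _
  have hAk : (1:ℝ) ≤ A * k := one_le_mul_of_one_le_of_one_le hA1 hk'
  obtain ⟨c, hc⟩ : ∃ c, c = Real.log (64 * k * A) := ⟨_, rfl⟩
  have hcexp : Real.exp c = 64 * k * A := by rw [hc, Real.exp_log (by positivity)]
  have hc1 : 1 ≤ c := by
    rw [hc, Real.le_log_iff_exp_le (by positivity)]
    have := Real.exp_one_lt_d9
    nlinarith
  obtain ⟨L, hL⟩ : ∃ L, L = 2 * c * m / min ν σ := ⟨_, rfl⟩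
  have hmin : 0 < min ν σ := lt_min hν0 hσ
  have hL0 : 0 < L := by rw [hL]; positivity
  obtain ⟨p, q, hS, hLq, hgap⟩ := seq_exists
    (fun p q => 0 < q ∧ IsCoprime p (q:ℤ) ∧ |(p : ℝ) / q - α| < (q : ℝ) ^ (-(2 + δ)))
    (by
      intro x
      obtain ⟨N, hN⟩ := exists_nat_ge (Real.exp x)
      obtain ⟨p, q, h1, h2, h3, h4⟩ := hcon N
      refine ⟨p, q, ⟨h2, h3, h4⟩, ?_⟩
      rw [Real.le_log_iff_exp_le (by exact_mod_cast h2)]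
      have : (N:ℝ) ≤ q := by exact_mod_cast h1
      linarith) L (max 1 (2/σ)) hL0.le (le_max_left _ _) m
  have hlogpos : ∀ i, 0 < Real.log (q i) := fun i => hL0.trans_le (hLq i)
  obtain ⟨R, hR⟩ : ∃ R, R = ∑ i, (Real.log (q i) / ν + Real.log (q i)) := ⟨_, rfl⟩
  have hR1 : ∀ i, Real.log (q i) / ν + Real.log (q i) ≤ R := by
    intro i
    rw [hR]
    refine Finset.single_le_sum (f := fun i => Real.log (q i) / ν + Real.log (q i))
      (fun i _ => ?_) (Finset.mem_univ i)
    have := hlogpos i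
    positivity
  have hR2 : ∀ i, Real.log (q i) ≤ R := fun i => by
    have h1 := hR1 i
    have h2 : 0 < Real.log (q i) / ν := div_pos (hlogpos i) hν0
    linarith
  have hR3 : ∀ i, Real.log (q i) ≤ ν * R := fun i => by
    have h1 := hR1 i
    have h2 : 0 < Real.log (q i) := (hlogpos i)
    have h3 : Real.log (q i) / ν ≤ R := by linarith
    rw [div_le_iff₀ hν0] at h3
    linarith
  have hR0 : 0 < R := (hlogpos ⟨0, hm⟩).trans_le (hR2 _)
  let r : Fin m → ℕ := fun i => ⌈R / Real.log (q i)⌉₊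
  have hrge : ∀ i, R / Real.log (q i) ≤ r i := fun i => Nat.le_ceil _
  have hrge' : ∀ i, R ≤ r i * Real.log (q i) := fun i => by
    have := hrge i
    rwa [div_le_iff₀ (hlogpos i)] at this
  have hrpos : ∀ i, 0 < r i := fun i => Nat.ceil_pos.mpr (div_pos hR0 (hlogpos i))
  have hrlt : ∀ i, (r i : ℝ) < R / Real.log (q i) + 1 := fun i =>
    Nat.ceil_lt_add_one (div_pos hR0 (hlogpos i)).le
  have hrle : ∀ i, (r i : ℝ) ≤ 2 * (R / Real.log (q i)) := fun i => by
    have h1 := hrlt i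
    have h2 : 1 ≤ R / Real.log (q i) := by
      rw [le_div_iff₀ (hlogpos i)]; linarith [hR2 i]
    linarith
  have hrle' : ∀ i, (r i : ℝ) * Real.log (q i) ≤ (1 + ν) * R := fun i => by
    have h1 := mul_le_mul_of_nonneg_right (hrlt i).le (hlogpos i).le
    rw [add_mul, div_mul_cancel₀ _ (hlogpos i).ne'] at h1
    linarith [hR3 i]
  have hsum : ((∑ i, r i : ℕ) : ℝ) * c ≤ min ν σ * R := by
    have h1 : ((∑ i, r i : ℕ) : ℝ) ≤ m * (2 * (R / L)) := by
      push_cast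
      calc ∑ i, (r i : ℝ) ≤ ∑ i : Fin m, 2 * (R / L) := by
            refine Finset.sum_le_sum fun i _ => (hrle i).trans ?_
            have := hLq i
            gcongr
        _ = _ := by simp
    have h2 := mul_le_mul_of_nonneg_right h1 (by linarith : (0:ℝ) ≤ c)
    refine h2.trans (le_of_eq ?_)
    rw [hL]
    field_simp
  have hS0 : (0:ℝ) ≤ ((∑ i, r i : ℕ) : ℝ) := Nat.cast_nonneg _
  have hsumσ : ((∑ i, r i : ℕ) : ℝ) * c ≤ σ * R :=
    hsum.trans (mul_le_mul_of_nonneg_right (min_le_right _ _) hR0.le)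
  have hsumν : ((∑ i, r i : ℕ) : ℝ) * c ≤ ν * R :=
    hsum.trans (mul_le_mul_of_nonneg_right (min_le_left _ _) hR0.le)
  obtain ⟨P, hP0, hPd, hPl, hPo⟩ := aux_poly s k hs hk α hα η hη0 (by rw [hη]; linarith) hm hm2 r hrpos
  have hPl' : (len P : ℝ) ≤ (8 * k : ℝ) ^ (∑ i, r i) := by exact_mod_cast hPl
  have hlenpos : (0:ℝ) < len P := by exact_mod_cast len_pos P hP0
  obtain ⟨J, hJ0, hJw⟩ := hroth r p q (σ * R) P hP0 hrpos (fun i => (hS i).1) (fun i => (hS i).2.1) hPd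
    (by
      intro i j hij
      have h1 := hgap i j hij
      have h2 : 2 / σ * Real.log (q j) ≤ Real.log (q i) :=
        (mul_le_mul_of_nonneg_right (le_max_right _ _) (hlogpos j).le).trans h1
      have h3 : 2 * Real.log (q j) ≤ σ * Real.log (q i) := by
        rw [div_mul_eq_mul_div, div_le_iff₀ hσ] at h2; linarith
      refine (hrle i).trans ?_
      have h4 : 2 * (R / Real.log (q i)) ≤ σ * (R / Real.log (q j)) := by
        rw [← mul_div_assoc, ← mul_div_assoc, div_le_div_iff₀ (hlogpos i) (hlogpos j)]
        nlinarith
      exact h4.trans (mul_le_mul_of_nonneg_left (hrge j) hσ.le))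
    (by nlinarith)
    (by
      refine le_trans ?_ hsumσ
      rw [Real.log_le_iff_le_exp hlenpos, Real.exp_nat_mul, hcexp]
      refine hPl'.trans (pow_le_pow_left₀ (by positivity) ?_ _)
      nlinarith)
    (fun i => mul_le_mul_of_nonneg_left (hrge' i) hσ.le)
  rw [shZ, coeff_sh, hD_map] at hJ0
  have hQd : ∀ i, degreeOf i (hD J P) ≤ r i := fun i => (degreeOf_hD i J P).trans (hPd i)
  have hlow := lower_bound r q p (fun i => (hS i).1) (hD J P) hQd hJ0
  have hord : ordge r (shZ (fun _ => α) (hD J P)) (m * (1/2 - η) - η) := by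
    have h1 := ordge_hD J hPo
    have h2 : shZ (fun _ => α) (hD J P) = hD J (shZ (fun _ => α) P) := by
      rw [shZ, ← hD_map, shZ, hD_sh]
    rw [h2]
    intro K hK
    have := h1 K hK
    linarith
  have hup := upper_bound r hrpos (hD J P) hQd α A hA1 hA2 _ ((2+δ) * R) (by positivity) hord
    (fun i => (p i : ℝ) / q i) (by
      intro i
      refine (hS i).2.2.le.trans ?_
      have hqi : (0:ℝ) < q i := by exact_mod_cast (hS i).1
      have hri : (0:ℝ) < r i := by exact_mod_cast hrpos i
      rw [Real.rpow_def_of_pos hqi]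
      apply Real.exp_le_exp.mpr
      rw [le_div_iff₀ hri]
      have := hrge' i
      nlinarith)
  have hlen : (len (hD J P) : ℝ) ≤ 2 ^ (∑ i, r i) * (8 * k : ℝ) ^ (∑ i, r i) := by
    have h1 : (len (hD J P) : ℝ) ≤ 2 ^ (∑ i, r i) * len P := by exact_mod_cast len_hD r J P hPd
    exact h1.trans (by gcongr)
  have hconst : (2:ℝ) ^ (∑ i, r i) * (2 ^ (∑ i, r i) * len (hD J P) * A ^ (∑ i, r i)) ≤
      Real.exp (ν * R) := by
    calc (2:ℝ) ^ (∑ i, r i) * (2 ^ (∑ i, r i) * len (hD J P) * A ^ (∑ i, r i))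
        ≤ 2 ^ (∑ i, r i) * (2 ^ (∑ i, r i) * (2 ^ (∑ i, r i) * (8 * k : ℝ) ^ (∑ i, r i))
          * A ^ (∑ i, r i)) := by gcongr
      _ = (Real.exp c) ^ (∑ i, r i) := by
          rw [hcexp, ← mul_pow, ← mul_pow, ← mul_pow, ← mul_pow]; congr 1; ring
      _ = Real.exp (((∑ i, r i : ℕ) : ℝ) * c) := by rw [Real.exp_nat_mul]
      _ ≤ _ := Real.exp_le_exp.mpr hsumν
  have hprod : ∏ i, (q i : ℝ) ^ (r i) ≤ Real.exp (m * ((1 + ν) * R)) := by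
    calc ∏ i, (q i : ℝ) ^ (r i) = ∏ i, Real.exp (r i * Real.log (q i)) := by
          refine Finset.prod_congr rfl fun i _ => ?_
          have hqi : (0:ℝ) < q i := by exact_mod_cast (hS i).1
          rw [Real.exp_nat_mul, Real.exp_log hqi]
      _ ≤ ∏ i : Fin m, Real.exp ((1 + ν) * R) :=
          Finset.prod_le_prod (fun i _ => (Real.exp_pos _).le)
            (fun i _ => Real.exp_le_exp.mpr (hrle' i))
      _ = _ := by rw [Finset.prod_const, Real.exp_nat_mul]; simp
  have hfin : (1:ℝ) ≤ Real.exp (ν * R) * Real.exp (-((2+δ) * R) * (m * (1/2 - η) - η)) *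
      Real.exp (m * ((1 + ν) * R)) := by
    refine hlow.trans (mul_le_mul (hup.trans ?_) hprod (by positivity) (by positivity))
    exact mul_le_mul_of_nonneg_right hconst (Real.exp_pos _).le
  rw [← Real.exp_add, ← Real.exp_add, Real.one_le_exp_iff] at hfin
  have h1 : ν * R + -((2+δ) * R) * (m * (1/2 - η) - η) + m * ((1 + ν) * R) =
      R * (ν - (2+δ) * (m * (1/2 - η) - η) + m * (1 + ν)) := by ring
  rw [h1] at hfin
  have h2 : 0 ≤ ν - (2+δ) * (m * (1/2 - η) - η) + m * (1 + ν) :=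
    nonneg_of_mul_nonneg_right hfin hR0
  have h3 : ν - (2+δ) * (m * (1/2 - η) - η) + m * (1 + ν) ≤
      m * (1 + 2 * ν - (2+δ) * (1/2 - 2 * η)) := by
    have h4 : ν ≤ m * ν := by nlinarith
    have h5 : (2 + δ) * η ≤ m * ((2+δ) * η) := by
      have : 0 ≤ (2+δ)*η := by positivity
      nlinarith
    nlinarith
  have h6 : 1 + 2 * ν - (2+δ) * (1/2 - 2 * η) < 0 := by
    rw [hν, hη]; nlinarith
  nlinarith

end RothAux

namespace RothAux

lemma pow_sub_ge (s : ℕ) (hs : 1 ≤ s) (a x : ℝ) (ha : 1 ≤ a) (hx : 0 ≤ x) :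
    |x - a| ≤ |a ^ s - x ^ s| := by
  rw [← geom_sum₂_mul, abs_mul, abs_sub_comm x a]
  have h1 : (1:ℝ) ≤ ∑ i ∈ Finset.range s, a ^ i * x ^ (s - 1 - i) := by
    have h2 : a ^ (s-1) * x ^ (s - 1 - (s-1)) ≤ ∑ i ∈ Finset.range s, a ^ i * x ^ (s - 1 - i) :=
      Finset.single_le_sum (f := fun i => a ^ i * x ^ (s - 1 - i))
        (fun i _ => by positivity) (Finset.mem_range.mpr (by omega))
    rw [Nat.sub_self, pow_zero, mul_one] at h2
    exact (one_le_pow₀ ha).trans h2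
  have h3 : (1:ℝ) ≤ |∑ i ∈ Finset.range s, a ^ i * x ^ (s - 1 - i)| := h1.trans (le_abs_self _)
  nlinarith [abs_nonneg (a - x)]

end RothAux

set_option maxHeartbeats 1000000 in
theorem wneabc_for_roots (s k : ℕ) (hs : 2 ≤ s) (hk : 2 ≤ k)
    (hknp : ¬ ∃ m : ℕ, m ^ s = k) :
    ∀ ε > (0 : ℝ), ∃ K > (0 : ℝ), ∀ p q : ℕ, 0 < p → 0 < q → Nat.Coprime p q →
      |(k : ℝ) ^ ((s : ℝ)⁻¹) - (p : ℝ) / (q : ℝ)| < 1 / (q : ℝ) ^ 2 →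
      ∀ d : ℤ, d = (k : ℤ) * (q : ℤ) ^ s - (p : ℤ) ^ s → d ≠ 0 →
      max ((p : ℝ) ^ s) ((k : ℝ) * (q : ℝ) ^ s) <
        K * (|(d : ℝ)| * (p : ℝ) * (q : ℝ) * (k : ℝ)) ^ ((1 : ℝ) + ε) := by
  intro ε hε
  obtain ⟨α, hαdef⟩ : ∃ α, α = (k : ℝ) ^ ((s : ℝ)⁻¹) := ⟨_, rfl⟩
  have hk1 : (1:ℝ) ≤ k := by exact_mod_cast (by omega : 1 ≤ k)
  have hs2 : (2:ℝ) ≤ s := by exact_mod_cast hs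
  have hα : α ^ s = k := by
    rw [hαdef]; exact Real.rpow_inv_natCast_pow (by positivity) (by omega)
  have hα1 : 1 ≤ α := by rw [hαdef]; exact Real.one_le_rpow hk1 (by positivity)
  obtain ⟨δ, hδdef⟩ : ∃ δ, δ = min 1 (s * ε / (1 + ε)) := ⟨_, rfl⟩
  have hδ : 0 < δ := by rw [hδdef]; exact lt_min one_pos (by positivity)
  have hδ1 : δ ≤ 1 := by rw [hδdef]; exact min_le_left _ _
  have hδ2 : δ * (1 + ε) ≤ s * ε := by
    have : δ ≤ s * ε / (1 + ε) := by rw [hδdef]; exact min_le_right _ _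
    rwa [le_div_iff₀ (by positivity)] at this
  obtain ⟨Q0, hQ0⟩ := RothAux.roth s k (by omega) (by omega) α hα δ hδ hδ1
  refine ⟨(α + 1) ^ s * ((2:ℝ) ^ (1 + ε) + (Q0 : ℝ) ^ s) + 1, by positivity, ?_⟩
  intro p q hp hq hcop hlt d hd hd0
  rw [← hαdef] at hlt
  have hp1 : (1:ℝ) ≤ p := by exact_mod_cast hp
  have hq1 : (1:ℝ) ≤ q := by exact_mod_cast hq
  have hq0 : (0:ℝ) < q := by linarith
  have hdR : (d : ℝ) = k * (q:ℝ) ^ s - (p:ℝ) ^ s := by rw [hd]; push_cast; rfl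
  have hdabs : (1:ℝ) ≤ |(d:ℝ)| := by
    rw [← Int.cast_abs]; exact_mod_cast Int.one_le_abs hd0
  have hq2 : 1 / (q:ℝ) ^ 2 ≤ 1 := by
    rw [div_le_one (by positivity)]; exact one_le_pow₀ hq1
  rw [abs_lt] at hlt
  have hpq : (p:ℝ) ≤ (α + 1) * q := by
    have h1 : (p:ℝ) / q ≤ α + 1 := by linarith [hlt.1]
    rwa [div_le_iff₀ hq0] at h1
  have hmax : max ((p : ℝ) ^ s) ((k : ℝ) * (q : ℝ) ^ s) ≤ (α + 1) ^ s * (q:ℝ) ^ s := by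
    rw [← mul_pow]
    apply max_le
    · exact pow_le_pow_left₀ (by positivity) hpq s
    · rw [← hα, ← mul_pow]
      exact pow_le_pow_left₀ (by positivity) (by nlinarith) s
  have hB : (1:ℝ) ≤ |(d : ℝ)| * (p : ℝ) * (q : ℝ) * (k : ℝ) :=
    one_le_mul_of_one_le_of_one_le (one_le_mul_of_one_le_of_one_le
      (one_le_mul_of_one_le_of_one_le hdabs hp1) hq1) hk1
  obtain ⟨B, hBdef⟩ : ∃ B, B = |(d : ℝ)| * (p : ℝ) * (q : ℝ) * (k : ℝ) := ⟨_, rfl⟩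
  rw [← hBdef] at hB ⊢
  have hBp : (1:ℝ) ≤ B ^ (1 + ε) := Real.one_le_rpow hB (by linarith)
  have hA0 : 0 < (α + 1) ^ s := by positivity
  have h20 : (0:ℝ) < 2 ^ (1 + ε) := by positivity
  by_cases hc : q < Q0
  · have h1 : (q:ℝ) ^ s ≤ (Q0:ℝ) ^ s :=
      pow_le_pow_left₀ hq0.le (by exact_mod_cast hc.le) s
    have h2 : (α + 1) ^ s * (q:ℝ) ^ s < (α + 1) ^ s * ((2:ℝ) ^ (1 + ε) + (Q0 : ℝ) ^ s) + 1 := by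
      have : (α + 1) ^ s * (q:ℝ) ^ s ≤ (α + 1) ^ s * (Q0:ℝ) ^ s :=
        mul_le_mul_of_nonneg_left h1 hA0.le
      nlinarith [mul_pos hA0 h20]
    refine (hmax.trans_lt h2).trans_le ?_
    exact le_mul_of_one_le_right (by positivity) hBp
  · push Not at hc
    have hR := hQ0 (p:ℤ) q hc hq (Nat.isCoprime_iff_coprime.mpr hcop)
    push_cast at hR
    have hx := RothAux.pow_sub_ge s (by omega) α ((p:ℝ)/q) hα1 (by positivity)
    have hd2 : |(d:ℝ)| = (q:ℝ) ^ s * |α ^ s - ((p:ℝ)/q) ^ s| := by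
      rw [hdR, ← abs_of_pos (pow_pos hq0 s), ← abs_mul, abs_of_pos (pow_pos hq0 s), hα, div_pow,
        mul_sub, mul_div_cancel₀ _ (pow_pos hq0 s).ne', mul_comm]
    have hd3 : (q:ℝ) ^ ((s:ℝ) - 2 - δ) ≤ |(d:ℝ)| := by
      rw [hd2, show (s:ℝ) - 2 - δ = s + -(2 + δ) by ring, Real.rpow_add hq0, Real.rpow_natCast]
      exact mul_le_mul_of_nonneg_left (hR.trans hx) (by positivity)
    have hp2 : (q:ℝ) / 2 ≤ p := by
      by_cases h1 : q = 1
      · rw [h1]; push_cast; linarith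
      · have hq3 : (2:ℝ) ≤ q := by exact_mod_cast (by omega : 2 ≤ q)
        have h2 : 1 / (q:ℝ)^2 ≤ 1/2 := by
          apply one_div_le_one_div_of_le (by norm_num)
          nlinarith
        have h3 : 1/2 ≤ (p:ℝ) / q := by linarith [hlt.2]
        rw [le_div_iff₀ hq0] at h3
        linarith
    have hB2 : (q:ℝ) ^ ((s:ℝ) - δ) / 2 ≤ B := by
      have h1 : (q:ℝ) ^ ((s:ℝ) - δ) / 2 = (q:ℝ) ^ ((s:ℝ) - 2 - δ) * (q / 2) * q * 1 := by
        rw [show (s:ℝ) - δ = (s - 2 - δ) + 2 by ring, Real.rpow_add hq0, Real.rpow_two]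
        ring
      rw [h1, hBdef]
      gcongr
    have hB3 : (q:ℝ) ^ s ≤ (2:ℝ) ^ (1 + ε) * B ^ (1 + ε) := by
      rw [← Real.mul_rpow (by norm_num) (by linarith)]
      calc (q:ℝ) ^ s = (q:ℝ) ^ (s:ℝ) := (Real.rpow_natCast _ _).symm
        _ ≤ (q:ℝ) ^ (((s:ℝ) - δ) * (1 + ε)) := by
            apply Real.rpow_le_rpow_of_exponent_le hq1
            nlinarith
        _ = ((q:ℝ) ^ ((s:ℝ) - δ)) ^ (1 + ε) := Real.rpow_mul hq0.le _ _
        _ ≤ (2 * B) ^ (1 + ε) := by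
            apply Real.rpow_le_rpow (by positivity) (by linarith) (by linarith)
    have hB0 : 0 < B ^ (1 + ε) := by linarith
    calc _ ≤ (α + 1) ^ s * (q:ℝ) ^ s := hmax
      _ ≤ (α + 1) ^ s * ((2:ℝ) ^ (1 + ε) * B ^ (1 + ε)) := mul_le_mul_of_nonneg_left hB3 hA0.le
      _ = ((α + 1) ^ s * (2:ℝ) ^ (1 + ε)) * B ^ (1 + ε) := by ring
      _ < _ := by
          apply mul_lt_mul_of_pos_right _ hB0
          have : 0 ≤ (α + 1) ^ s * (Q0:ℝ) ^ s := by positivity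
          nlinarith
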